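/- Let K be an algebraically closed field and λ ∈ K \ {0, 1}. Let A_5 be the algebra given by the quiver with two vertices 1, 2, a loop α at vertex 1, an arrow γ: 1 → 2 and an arrow β: 2 → 1, bound by the relations α² = γβ and βαγ = 0. Then A_5 has exactly 8 isomorphism classes of basic support τ-tilting modules. -/

import Mathlib

/- Formalization of statements from
   "Report on the finiteness of silting objects"
   by T. Aihara, T. Honma, K. Miyamoto, Q. Wang. -/

open CategoryTheory CategoryTheory.Limits

universe u v w

noncomputable section
namespace PaperSilting
/-! ### Module-theoretic notions.

We model right `Λ`-modules as left modules over the opposite ring; all the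
definitions below are stated for left modules over a ring `R` and are applied
with `R := Λᵐᵒᵖ`. -/

/-- The category of `R`-modules (in `Type 0`). -/
abbrev ModCat (R : Type) [Ring R] := ModuleCat.{0} R

variable {R : Type} [Ring R]

/-- The module object `M` is finitely generated. -/
def IsFGMod {R : Type} [Ring R] (M : ModCat R) : Prop := Module.Finite R M

/-- Indecomposable module object. -/
def IsIndecMod {R : Type} [Ring R] (M : ModCat R) : Prop :=
  ¬ IsZero M ∧ ∀ A B : ModCat R, Nonempty (M ≅ A ⊞ B) → IsZero A ∨ IsZero B

/-- `N` belongs to `add M`, i.e. `N` is a direct summand of a finite direct sum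
of copies of `M`. -/
def MemAddMod {R : Type} [Ring R] (N M : ModCat R) : Prop :=
  ∃ (k : ℕ) (g : N ⟶ ⨁ (fun _ : Fin k => M)) (h : (⨁ (fun _ : Fin k => M)) ⟶ N),
    g ≫ h = 𝟙 N

/-- A basic module: it has no direct summand of the form `N ⊕ N` with `N ≠ 0`. -/
def IsBasicMod {R : Type} [Ring R] (M : ModCat R) : Prop :=
  ∀ N X : ModCat R, Nonempty (M ≅ (N ⊞ N) ⊞ X) → IsZero N

/-- `M` is τ-rigid, i.e. `Hom(M, τM) = 0`: there is a projective presentation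
`P₁ → P₀ → M → 0` by finitely generated projectives such that
`Hom(P₀, M) → Hom(P₁, M)` is surjective (Adachi–Iyama–Reiten). -/
def IsTauRigidMod {R : Type} [Ring R] (M : ModCat R) : Prop :=
  ∃ (P₁ P₀ : ModCat R) (f : P₁ ⟶ P₀) (g : P₀ ⟶ M),
    Projective P₁ ∧ Projective P₀ ∧ IsFGMod P₁ ∧ IsFGMod P₀ ∧
    Function.Surjective g ∧ Function.Exact f g ∧
    ∀ h : P₁ ⟶ M, ∃ k : P₀ ⟶ M, f ≫ k = h

/-- A τ-rigid pair `(M, P)`: `M` is a τ-rigid module and `P` is a finitely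
generated projective with `Hom(P, M) = 0`. -/
def IsTauRigidPairMod {R : Type} [Ring R] (M P : ModCat R) : Prop :=
  IsFGMod M ∧ IsTauRigidMod M ∧ IsFGMod P ∧ Projective P ∧ ∀ f : P ⟶ M, f = 0

/-- `M` is a support τ-tilting module: `(M, P)` is a maximal τ-rigid pair for
some projective `P` (Adachi–Iyama–Reiten; equivalently, `M` is the `0`-th
cohomology of a two-term silting complex in `K^b(proj)`). -/
def IsSupportTauTiltingMod {R : Type} [Ring R] (M : ModCat R) : Prop :=
  ∃ P : ModCat R, IsTauRigidPairMod M P ∧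
    ∀ N Q : ModCat R, IsTauRigidPairMod (M ⊞ N) (P ⊞ Q) → MemAddMod N M ∧ MemAddMod Q P

/-- The ring `R` admits only finitely many basic support τ-tilting modules up
to isomorphism. -/
def IsTauTiltingFiniteRing (R : Type) [Ring R] : Prop :=
  ∃ (n : ℕ) (f : Fin n → ModCat R),
    ∀ M : ModCat R, IsSupportTauTiltingMod M → IsBasicMod M → ∃ i, Nonempty (M ≅ f i)

/-- The ring `R` admits only finitely many finitely generated indecomposable
modules up to isomorphism. -/
def IsRepFiniteRing (R : Type) [Ring R] : Prop :=
  ∃ (n : ℕ) (f : Fin n → ModCat R),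
    ∀ M : ModCat R, IsFGMod M → IsIndecMod M → ∃ i, Nonempty (M ≅ f i)

/-- `R` has exactly `n` isomorphism classes of basic support τ-tilting modules. -/
def SupportTauTiltingCount (R : Type) [Ring R] (n : ℕ) : Prop :=
  ∃ f : Fin n → ModCat R,
    (∀ i, IsSupportTauTiltingMod (f i) ∧ IsBasicMod (f i)) ∧
    (∀ i j, Nonempty (f i ≅ f j) → i = j) ∧
    (∀ M : ModCat R, IsSupportTauTiltingMod M → IsBasicMod M → ∃ i, Nonempty (M ≅ f i))

/-- An algebra `Λ` is τ-tilting-finite (with respect to right modules,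
i.e. left `Λᵐᵒᵖ`-modules). -/
def IsTauTiltingFinite (Λ : Type) [Ring Λ] : Prop := IsTauTiltingFiniteRing Λᵐᵒᵖ

/-- An algebra `Λ` is representation-finite (with respect to right modules). -/
def IsRepFinite (Λ : Type) [Ring Λ] : Prop := IsRepFiniteRing Λᵐᵒᵖ
/-- The defining relations of the algebra `A₅`, as relations on the free algebra on
the idempotents `e_1, …, e_2` and the arrows of its quiver. -/
def A5Rel (K : Type) [Field K] : FreeAlgebra K (Fin 5) → FreeAlgebra K (Fin 5) → Prop := fun u v =>
  (u, v) ∈ ([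
    (FreeAlgebra.ι K (0 : Fin 5) * FreeAlgebra.ι K (0 : Fin 5), FreeAlgebra.ι K (0 : Fin 5)),
    (FreeAlgebra.ι K (0 : Fin 5) * FreeAlgebra.ι K (1 : Fin 5), (0 : FreeAlgebra K (Fin 5))),
    (FreeAlgebra.ι K (1 : Fin 5) * FreeAlgebra.ι K (0 : Fin 5), (0 : FreeAlgebra K (Fin 5))),
    (FreeAlgebra.ι K (1 : Fin 5) * FreeAlgebra.ι K (1 : Fin 5), FreeAlgebra.ι K (1 : Fin 5)),
    (FreeAlgebra.ι K (0 : Fin 5) + FreeAlgebra.ι K (1 : Fin 5), 1),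
    (FreeAlgebra.ι K (2 : Fin 5), FreeAlgebra.ι K (0 : Fin 5) * FreeAlgebra.ι K (2 : Fin 5) * FreeAlgebra.ι K (0 : Fin 5)),
    (FreeAlgebra.ι K (3 : Fin 5), FreeAlgebra.ι K (0 : Fin 5) * FreeAlgebra.ι K (3 : Fin 5) * FreeAlgebra.ι K (1 : Fin 5)),
    (FreeAlgebra.ι K (4 : Fin 5), FreeAlgebra.ι K (1 : Fin 5) * FreeAlgebra.ι K (4 : Fin 5) * FreeAlgebra.ι K (0 : Fin 5)),
    (FreeAlgebra.ι K (2 : Fin 5) * FreeAlgebra.ι K (2 : Fin 5), FreeAlgebra.ι K (3 : Fin 5) * FreeAlgebra.ι K (4 : Fin 5)),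
    (FreeAlgebra.ι K (4 : Fin 5) * FreeAlgebra.ι K (2 : Fin 5) * FreeAlgebra.ι K (3 : Fin 5), (0 : FreeAlgebra K (Fin 5)))
  ] : List ((FreeAlgebra K (Fin 5)) × (FreeAlgebra K (Fin 5))))

/-- the algebra `A₅`, presented by quiver and relations. -/
def A5 (K : Type) [Field K] : Type := RingQuot (A5Rel K)

instance (K : Type) [Field K] : Ring (A5 K) :=
  inferInstanceAs (Ring (RingQuot (A5Rel K)))

instance (K : Type) [Field K] : Algebra K (A5 K) :=
  inferInstanceAs (Algebra K (RingQuot (A5Rel K)))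

/-!
A `τ`-rigid module `M` has a projective presentation `f : Q₁ → Q₀`, `g : Q₀ → M` in which `g` is a
projective cover and every map `Q₁ → M` extends along `f`. Write `Q₁ = P₁ ⊗ W₁ ⊕ P₂ ⊗ W₂` and
`Q₀ = P₁ ⊗ V₁ ⊕ P₂ ⊗ V₂` for vector spaces `Wᵢ`, `Vᵢ`. As `f` lands in the radical, a common
summand of `Q₁` and `Q₀` would give a map `Q₁ → M` that does not extend. Hence `W₁ = 0` or
`V₁ = 0`, and `W₂ = 0` or `V₂ = 0`; the cases in which `M` is neither projective nor zero are
`f : P₂ ⊗ W → P₁ ⊗ V` and `f : P₁ ⊗ W → P₂ ⊗ V`. Such an `f` is given by three linear maps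
`F₀, F₁, F₂ : W → V`, and the extension property bounds their kernels and images tightly enough to
determine `M`: in the list

  `Y = P₁ / (γ, γα)`, `X = P₁ / (γ)`, `P₁`, `P₂`, `Z = P₂² / (βφ - αβψ)`, `U = P₂ / (β)`

of modules with local endomorphism rings, `M` is a direct sum of copies of two neighbours.

Conversely, the sum of two neighbours is `τ`-rigid. By the Krull–Schmidt property the `τ`-tilting
modules are the five sums of two neighbours, and the remaining support `τ`-tilting modules come
from `Y`, `U` and `0`, the only proper summands with a non-zero projective module orthogonal to
them: these are `P₂`, `P₁` and `P₁ ⊕ P₂`.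
-/

section LocalRing

variable {A : Type*} [Ring A] [IsLocalRing A]

theorem isUnit_one_sub_of_not_isUnit {a : A} (ha : ¬IsUnit a) : IsUnit (1 - a) :=
  (IsLocalRing.isUnit_or_isUnit_of_add_one (add_sub_cancel a 1)).resolve_left ha

theorem isUnit_sub_of_not_isUnit {a b : A} (ha : IsUnit a) (hb : ¬IsUnit b) : IsUnit (a - b) :=
  (IsLocalRing.isUnit_or_isUnit_of_isUnit_add (by rwa [sub_add_cancel])).resolve_right hb

theorem eq_zero_or_eq_one_of_isIdempotentElem {e : A} (he : IsIdempotentElem e) :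
    e = 0 ∨ e = 1 := by
  by_cases hu : IsUnit e
  · exact .inr ((IsIdempotentElem.iff_eq_one_of_isUnit hu).1 he)
  · have := (IsIdempotentElem.iff_eq_one_of_isUnit (isUnit_one_sub_of_not_isUnit hu)).1 he.one_sub
    exact .inl (by simpa using this)

instance isDedekindFiniteMonoid_of_isLocalRing : IsDedekindFiniteMonoid A where
  mul_eq_one_symm {a b} hab := by
    have he : IsIdempotentElem (b * a) := by
      rw [IsIdempotentElem, mul_assoc, ← mul_assoc a, hab, one_mul]
    refine (eq_zero_or_eq_one_of_isIdempotentElem he).resolve_left fun h0 => one_ne_zero (α := A) ?_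
    calc (1 : A) = a * (b * a) * b := by rw [← mul_assoc, hab, one_mul, hab]
      _ = 0 := by rw [h0, mul_zero, zero_mul]

end LocalRing

section Retracts

variable {A : Type*} [Ring A] {L L' M N : Type*}
  [AddCommGroup L] [Module A L] [AddCommGroup L'] [Module A L'] [AddCommGroup M] [Module A M]
  [AddCommGroup N] [Module A N]

variable (A L M) in
/-- `L` is isomorphic to a direct summand of `M`, encoded by a split monomorphism. -/
def IsRetract : Prop :=
  ∃ (i : L →ₗ[A] M) (p : M →ₗ[A] L), p ∘ₗ i = LinearMap.id

namespace IsRetract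

theorem of_equiv (e : N ≃ₗ[A] M) : IsRetract A N M :=
  ⟨e, e.symm, by ext x; simp⟩

protected theorem refl : IsRetract A M M :=
  .of_equiv (.refl A M)

theorem trans (h : IsRetract A L M) (h' : IsRetract A M N) : IsRetract A L N := by
  obtain ⟨i, p, hip⟩ := h
  obtain ⟨j, q, hjq⟩ := h'
  exact ⟨j ∘ₗ i, p ∘ₗ q, by rw [LinearMap.comp_assoc, ← LinearMap.comp_assoc i, hjq,
    LinearMap.id_comp, hip]⟩

theorem subsingleton [Subsingleton M] (h : IsRetract A N M) : Subsingleton N := by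
  obtain ⟨i, p, hip⟩ := h
  exact (Function.LeftInverse.injective (f := i) (LinearMap.congr_fun hip)).subsingleton

theorem iff_of_equiv (e : M ≃ₗ[A] N) : IsRetract A L M ↔ IsRetract A L N :=
  ⟨fun h => h.trans (.of_equiv e), fun h => h.trans (.of_equiv e.symm)⟩

theorem hom_eq_zero (hL : IsRetract A L' L) (hN : IsRetract A N M)
    (h : ∀ f : L →ₗ[A] M, f = 0) (f : L' →ₗ[A] N) : f = 0 := by
  obtain ⟨i, p, hip⟩ := hL
  obtain ⟨j, q, hjq⟩ := hN
  ext x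
  have hx : p (i x) = x := LinearMap.congr_fun hip x
  have hfx : q (j (f x)) = f x := LinearMap.congr_fun hjq (f x)
  simpa [hx, hfx] using congrArg q (LinearMap.congr_fun (h (j ∘ₗ f ∘ₗ p)) (i x))

theorem fst_prod : IsRetract A M (M × N) :=
  ⟨.inl A M N, .fst A M N, LinearMap.fst_comp_inl ..⟩

theorem snd_prod : IsRetract A N (M × N) :=
  ⟨.inr A M N, .snd A M N, LinearMap.snd_comp_inr ..⟩

theorem apply_pi {ι : Type*} (i : ι) : IsRetract A M (ι → M) := by
  classical exact ⟨.single A (fun _ => M) i, .proj i, LinearMap.proj_comp_single_same ..⟩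

theorem prodMap (h : IsRetract A L M) (h' : IsRetract A L' N) :
    IsRetract A (L × L') (M × N) := by
  obtain ⟨i, p, hip⟩ := h
  obtain ⟨j, q, hjq⟩ := h'
  refine ⟨i.prodMap j, p.prodMap q, ?_⟩
  rw [LinearMap.prodMap_comp, hip, hjq, LinearMap.prodMap_id]

theorem compLeft (ι : Type*) (h : IsRetract A N M) : IsRetract A (ι → N) (ι → M) := by
  obtain ⟨i, p, hip⟩ := h
  exact ⟨i.compLeft ι, p.compLeft ι, by ext x j; exact LinearMap.congr_fun hip (x j)⟩

theorem finite (h : IsRetract A N M) [Module.Finite A M] : Module.Finite A N := by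
  obtain ⟨i, p, hip⟩ := h
  exact .of_surjective p fun x => ⟨i x, LinearMap.congr_fun hip x⟩

theorem of_isUnit_comp {i : L →ₗ[A] M} {p : M →ₗ[A] L}
    (h : IsUnit (p ∘ₗ i : Module.End A L)) : IsRetract A L M := by
  obtain ⟨u, hu⟩ := h.exists_left_inv
  exact ⟨i, u ∘ₗ p, hu⟩

theorem exists_of_pi [IsLocalRing (Module.End A L)] {ι : Type*} [Finite ι] {M : ι → Type*}
    [∀ i, AddCommGroup (M i)] [∀ i, Module A (M i)] (h : IsRetract A L (∀ i, M i)) :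
    ∃ i, IsRetract A L (M i) := by
  classical
  have := Fintype.ofFinite ι
  obtain ⟨i, p, hip⟩ := h
  let c (j : ι) : Module.End A L :=
    (p ∘ₗ LinearMap.single A M j) ∘ₗ (LinearMap.proj j ∘ₗ i)
  have hc : ∑ j, c j = 1 := by
    ext x
    calc (∑ j, c j) x = p (∑ j, Pi.single j (i x j)) := by
          simp [c, LinearMap.sum_apply]
      _ = x := by rw [Finset.univ_sum_single]; exact LinearMap.congr_fun hip x
  obtain ⟨j, -, hj⟩ := IsLocalRing.exists_of_isUnit_sum (hc ▸ isUnit_one)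
  exact ⟨j, of_isUnit_comp hj⟩

theorem left_or_right [IsLocalRing (Module.End A L)] (h : IsRetract A L (M × N)) :
    IsRetract A L M ∨ IsRetract A L N := by
  obtain ⟨i, p, hip⟩ := h
  have hsum : (p ∘ₗ .inl A M N) ∘ₗ (.fst A M N ∘ₗ i) +
      (p ∘ₗ .inr A M N) ∘ₗ (.snd A M N ∘ₗ i) = (1 : Module.End A L) := by
    ext x
    simpa [← map_add] using LinearMap.congr_fun hip x
  exact (IsLocalRing.isUnit_or_isUnit_of_add_one hsum).imp of_isUnit_comp of_isUnit_comp

theorem nonempty_equiv [IsLocalRing (Module.End A M)] [Nontrivial L] (h : IsRetract A L M) :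
    Nonempty (L ≃ₗ[A] M) := by
  obtain ⟨i, p, hip⟩ := h
  have hpi (x : L) : p (i x) = x := LinearMap.congr_fun hip x
  let e : Module.End A M := i ∘ₗ p
  have he : IsIdempotentElem e := by ext x; simp [e, hpi]
  have he0 : e ≠ 0 := fun h0 => by
    obtain ⟨x, hx⟩ := exists_ne (0 : L)
    exact hx (by simpa [e, hpi] using congrArg p (LinearMap.congr_fun h0 (i x)))
  have he1 : e = 1 := (eq_zero_or_eq_one_of_isIdempotentElem he).resolve_left he0
  exact ⟨.ofLinearMap i p he1 hip⟩

end IsRetract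

variable (A L M) in
/-- `L` belongs to `add M`. Any finite type may index the copies of `M`. -/
def IsMemAdd : Prop :=
  ∃ (ι : Type) (_ : Finite ι), IsRetract A L (ι → M)

namespace IsMemAdd

theorem of_subsingleton [Subsingleton N] : IsMemAdd A N M :=
  ⟨Empty, inferInstance, 0, 0, Subsingleton.elim _ _⟩

theorem of_isRetract_left (h : IsRetract A L N) (h' : IsMemAdd A N M) : IsMemAdd A L M := by
  obtain ⟨ι, hι, h'⟩ := h'
  exact ⟨ι, hι, h.trans h'⟩

theorem pi_of_isRetract (ι : Type) [Finite ι] (h : IsRetract A N M) : IsMemAdd A (ι → N) M :=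
  ⟨ι, inferInstance, h.compLeft ι⟩

theorem prod (h : IsMemAdd A N M) (h' : IsMemAdd A L M) : IsMemAdd A (N × L) M := by
  obtain ⟨ι, _, h⟩ := h
  obtain ⟨κ, _, h'⟩ := h'
  exact ⟨ι ⊕ κ, inferInstance,
    (h.prodMap h').trans (.of_equiv (LinearEquiv.sumArrowLequivProdArrow ι κ A M).symm)⟩

end IsMemAdd

/-- `M` has no direct summand of the form `N × N` with `N ≠ 0`. -/
def IsBasic (A : Type*) [Ring A] (M : Type v) [AddCommGroup M] [Module A M] : Prop :=
  ∀ (N X : Type v) [AddCommGroup N] [Module A N] [AddCommGroup X] [Module A X],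
    Nonempty (M ≃ₗ[A] (N × N) × X) → Subsingleton N

end Retracts

section Basic

variable {A : Type*} [Ring A] {L M N : Type*}
  [AddCommGroup L] [Module A L] [AddCommGroup M] [Module A M] [AddCommGroup N] [Module A N]

theorem not_isUnit_comp_of_isEmpty_equiv [IsLocalRing (Module.End A M)]
    [IsLocalRing (Module.End A N)] (h : IsEmpty (M ≃ₗ[A] N)) (f : N →ₗ[A] M) (g : M →ₗ[A] N) :
    ¬IsUnit (f ∘ₗ g : Module.End A M) := by
  intro hu
  have : Nontrivial M := by
    by_contra hM
    rw [not_nontrivial_iff_subsingleton] at hM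
    exact zero_ne_one (α := Module.End A M) (Subsingleton.elim _ _)
  exact not_isEmpty_iff.2 (IsRetract.of_isUnit_comp hu).nonempty_equiv h

/-- An endomorphism of `M × N` without invertible diagonal entries lies in the Jacobson radical
of the endomorphism ring; elimination of one coordinate shows that it has no fixed vector. -/
theorem eq_zero_of_fixed_of_not_isUnit_diagonal [IsLocalRing (Module.End A M)]
    [IsLocalRing (Module.End A N)] (h : IsEmpty (M ≃ₗ[A] N)) (e : Module.End A (M × N))
    (hM : ¬IsUnit (.fst A M N ∘ₗ e ∘ₗ .inl A M N : Module.End A M))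
    (hN : ¬IsUnit (.snd A M N ∘ₗ e ∘ₗ .inr A M N : Module.End A N))
    {v : M × N} (hv : e v = v) : v = 0 := by
  obtain ⟨x, y⟩ := v
  let a : Module.End A M := .fst A M N ∘ₗ e ∘ₗ .inl A M N
  let b : N →ₗ[A] M := .fst A M N ∘ₗ e ∘ₗ .inr A M N
  let c : M →ₗ[A] N := .snd A M N ∘ₗ e ∘ₗ .inl A M N
  let d : Module.End A N := .snd A M N ∘ₗ e ∘ₗ .inr A M N
  have hxy : e (x, y) = e (x, 0) + e (0, y) := by rw [← map_add]; simp
  have hx : a x + b y = x := by simpa [hxy, a, b] using congrArg Prod.fst hv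
  have hy : c x + d y = y := by simpa [hxy, c, d] using congrArg Prod.snd hv
  obtain ⟨u, hu⟩ := (isUnit_one_sub_of_not_isUnit hM).exists_left_inv
  have hx' : x = u (b y) := by
    have : (1 - a) x = b y := by simpa [sub_eq_iff_eq_add'] using hx.symm
    rw [← this]
    exact (LinearMap.congr_fun hu x).symm
  have hy' : (1 - d - c ∘ₗ u ∘ₗ b) y = 0 := by
    have : y - d y - c x = 0 := by rw [sub_sub, add_comm, hy, sub_self]
    simpa [← hx'] using this
  have hunit : IsUnit (1 - d - c ∘ₗ u ∘ₗ b) :=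
    isUnit_sub_of_not_isUnit (isUnit_one_sub_of_not_isUnit hN)
      (not_isUnit_comp_of_isEmpty_equiv ⟨fun i => h.false i.symm⟩ c (u ∘ₗ b))
  have hy0 : y = 0 := by
    obtain ⟨w, hw⟩ := hunit.exists_left_inv
    simpa [hy'] using (LinearMap.congr_fun hw y).symm
  simp [hx', hy0]

theorem not_isUnit_comp_add_comp [IsLocalRing (Module.End A M)] [IsLocalRing (Module.End A N)]
    (h : IsEmpty (M ≃ₗ[A] N)) {a b : Module.End A M} (ha : ¬IsUnit a) (f : N →ₗ[A] M)
    (g : M →ₗ[A] N) : ¬IsUnit (a * b + f ∘ₗ g) := fun hu => by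
  rcases IsLocalRing.isUnit_or_isUnit_of_isUnit_add hu with hab | hfg
  · exact ha (isUnit_of_mul_isUnit_left hab)
  · exact not_isUnit_comp_of_isEmpty_equiv h f g hfg

/-- With respect to a decomposition `L = M ⊕ N` given by `i`, `p`, `j`, `q`, the `M`-diagonal
entry of `x * y` is not invertible when `x ^ 2 = 0`. -/
theorem not_isUnit_diagonal_of_sq_eq_zero [IsLocalRing (Module.End A M)]
    [IsLocalRing (Module.End A N)] (h : IsEmpty (M ≃ₗ[A] N)) {i : M →ₗ[A] L} {p : L →ₗ[A] M}
    {j : N →ₗ[A] L} {q : L →ₗ[A] N} (hid : ∀ v, i (p v) + j (q v) = v) (x y : Module.End A L)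
    (hx : ∀ v, x (x v) = 0) : ¬IsUnit (p ∘ₗ (x * y) ∘ₗ i : Module.End A M) := by
  have key (z : Module.End A L) : (p ∘ₗ (x * z) ∘ₗ i : Module.End A M) =
      (p ∘ₗ x ∘ₗ i) * (p ∘ₗ z ∘ₗ i) + (p ∘ₗ x ∘ₗ j) ∘ₗ (q ∘ₗ z ∘ₗ i) := by
    ext m
    simpa using congrArg (p ∘ₗ x) (hid (z (i m))).symm
  have hpxi : ¬IsUnit (p ∘ₗ x ∘ₗ i : Module.End A M) := fun hu => by
    have hxx : (p ∘ₗ (x * x) ∘ₗ i : Module.End A M) = 0 := by ext m; simp [hx]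
    rw [key, add_eq_zero_iff_eq_neg, ← LinearMap.neg_comp] at hxx
    exact not_isUnit_comp_of_isEmpty_equiv h _ _ (hxx ▸ hu.mul hu)
  rw [key]
  exact not_isUnit_comp_add_comp h hpxi _ _

/-- A summand `X × X` would give the matrix units `x` and `y` below; since `x ^ 2 = 0`, the
diagonal entries of `x * y` are not invertible, but `x * y` fixes the first copy of `X`. -/
theorem IsBasic.prod_of_isLocalRing_end {M N : Type v} [AddCommGroup M] [Module A M]
    [AddCommGroup N] [Module A N] [IsLocalRing (Module.End A M)]
    [IsLocalRing (Module.End A N)] (h : IsEmpty (M ≃ₗ[A] N)) : IsBasic A (M × N) := by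
  rintro X Y _ _ _ _ ⟨φ⟩
  refine subsingleton_of_forall_eq 0 fun n => ?_
  let x₀ : Module.End A ((X × X) × Y) :=
    .inl A (X × X) Y ∘ₗ .inl A X X ∘ₗ .snd A X X ∘ₗ .fst A (X × X) Y
  let y₀ : Module.End A ((X × X) × Y) :=
    .inl A (X × X) Y ∘ₗ .inr A X X ∘ₗ .fst A X X ∘ₗ .fst A (X × X) Y
  let x : Module.End A (M × N) := φ.symm ∘ₗ x₀ ∘ₗ φ
  let y : Module.End A (M × N) := φ.symm ∘ₗ y₀ ∘ₗ φ
  have hx (v) : x (x v) = 0 := by simp [x, x₀]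
  have hfix : (x * y) (φ.symm ((n, 0), 0)) = φ.symm ((n, 0), 0) := by simp [x, x₀, y, y₀]
  have hzero := eq_zero_of_fixed_of_not_isUnit_diagonal h (x * y)
    (not_isUnit_diagonal_of_sq_eq_zero h (q := .snd A M N) (j := .inr A M N) (by simp) x y hx)
    (not_isUnit_diagonal_of_sq_eq_zero ⟨fun i => h.false i.symm⟩ (q := .fst A M N)
      (j := .inl A M N) (by simp) x y hx) hfix
  simpa using hzero

theorem IsBasic.of_equiv_prod {L M N : Type v} [AddCommGroup L] [Module A L] [AddCommGroup M]
    [Module A M] [AddCommGroup N] [Module A N] (h : IsBasic A L) (e : L ≃ₗ[A] M × N) :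
    IsBasic A M := by
  rintro X Y _ _ _ _ ⟨φ⟩
  exact h X (Y × N) ⟨e.trans ((φ.prodCongr (.refl A N)).trans (.prodAssoc A (X × X) Y N))⟩

end Basic

section Summands

variable {A : Type*} [Ring A] {L L' M N : Type*} [AddCommGroup L] [Module A L]
  [AddCommGroup L'] [Module A L'] [AddCommGroup M] [Module A M] [AddCommGroup N] [Module A N]

variable (A L L' M) in
/-- `M` is a direct sum of finitely many copies of `L` and `L'`. -/
def IsSumOf : Prop :=
  ∃ p q : ℕ, Nonempty (M ≃ₗ[A] (Fin p → L) × (Fin q → L'))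

theorem IsBasic.le_one {L M N : Type v} [AddCommGroup L] [Module A L] [AddCommGroup M] [Module A M]
    [AddCommGroup N] [Module A N] [Nontrivial L] (h : IsBasic A M) {p : ℕ}
    (e : M ≃ₗ[A] (Fin p → L) × N) : p ≤ 1 := by
  by_contra! hp
  obtain ⟨p, rfl⟩ := Nat.exists_eq_add_of_le' hp
  let split (n : ℕ) : (Fin (n + 1) → L) ≃ₗ[A] L × (Fin n → L) :=
    (Fin.consLinearEquiv A fun _ => L).symm
  let split₂ : (Fin (p + 2) → L) ≃ₗ[A] (L × L) × (Fin p → L) :=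
    (split (p + 1)).trans
      ((LinearEquiv.prodCongr (.refl A L) (split p)).trans (.symm (.prodAssoc A _ _ _)))
  have := h L ((Fin p → L) × N)
    ⟨e.trans ((split₂.prodCongr (.refl A N)).trans (.prodAssoc A _ _ _))⟩
  exact not_subsingleton L this

namespace IsSumOf

theorem isMemAdd (h : IsSumOf A L L' N) (hL : IsRetract A L N → IsRetract A L M)
    (hL' : IsRetract A L' N → IsRetract A L' M) : IsMemAdd A N M := by
  obtain ⟨p, q, ⟨e⟩⟩ := h
  have hp : IsMemAdd A (Fin p → L) M := by
    rcases isEmpty_or_nonempty (Fin p) with _ | ⟨⟨i⟩⟩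
    · exact .of_subsingleton
    · exact .pi_of_isRetract _ (hL (((IsRetract.apply_pi i).trans .fst_prod).trans
        (.of_equiv e.symm)))
  have hq : IsMemAdd A (Fin q → L') M := by
    rcases isEmpty_or_nonempty (Fin q) with _ | ⟨⟨i⟩⟩
    · exact .of_subsingleton
    · exact .pi_of_isRetract _ (hL' (((IsRetract.apply_pi i).trans .snd_prod).trans
        (.of_equiv e.symm)))
  exact .of_isRetract_left (.of_equiv e) (hp.prod hq)

theorem subsingleton (h : IsSumOf A L L' N) (hL : ¬IsRetract A L N) (hL' : ¬IsRetract A L' N) :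
    Subsingleton N := by
  obtain ⟨ι, _, hN⟩ := h.isMemAdd (M := PUnit.{1}) (fun h => (hL h).elim) fun h => (hL' h).elim
  exact hN.subsingleton

theorem isRetract_or_isRetract {X : Type*} [AddCommGroup X] [Module A X]
    [IsLocalRing (Module.End A X)] (h : IsSumOf A L L' N) (hX : IsRetract A X N) :
    IsRetract A X L ∨ IsRetract A X L' := by
  obtain ⟨p, q, ⟨e⟩⟩ := h
  rcases (hX.trans (.of_equiv e)).left_or_right with h | h
  · exact .inl h.exists_of_pi.choose_spec
  · exact .inr h.exists_of_pi.choose_spec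

theorem exists_equiv_of_isBasic {L L' M : Type v} [AddCommGroup L] [Module A L] [Nontrivial L]
    [AddCommGroup L'] [Module A L'] [Nontrivial L'] [AddCommGroup M] [Module A M]
    (h : IsSumOf A L L' M) (hM : IsBasic A M) : Nonempty (M ≃ₗ[A] L × L') ∨
      Nonempty (M ≃ₗ[A] L) ∨ Nonempty (M ≃ₗ[A] L') ∨ Subsingleton M := by
  obtain ⟨p, q, ⟨e⟩⟩ := h
  have hp : p ≤ 1 := hM.le_one e
  have hq : q ≤ 1 := hM.le_one (e.trans (.prodComm A _ _))
  let e₁ (L : Type v) [AddCommGroup L] [Module A L] : (Fin 1 → L) ≃ₗ[A] L :=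
    .funUnique (Fin 1) A L
  interval_cases p <;> interval_cases q
  · exact .inr (.inr (.inr e.injective.subsingleton))
  · exact .inr (.inr (.inl ⟨e.trans (.trans .uniqueProd (e₁ L'))⟩))
  · exact .inr (.inl ⟨e.trans (.trans .prodUnique (e₁ L))⟩)
  · exact .inl ⟨e.trans ((e₁ L).prodCongr (e₁ L'))⟩

end IsSumOf

end Summands

section Superfluous

variable {A : Type*} [Ring A] {M P₀ P₁ Q₀ Q₁ : Type*} [AddCommGroup M] [Module A M]
  [AddCommGroup P₀] [Module A P₀] [AddCommGroup P₁] [Module A P₁]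
  [AddCommGroup Q₀] [Module A Q₀] [AddCommGroup Q₁] [Module A Q₁]

/-- A superfluous (small) submodule: it can be dropped from any generating family. -/
def IsSuperfluous (N : Submodule A M) : Prop :=
  ∀ L : Submodule A M, L ⊔ N = ⊤ → L = ⊤

theorem IsSuperfluous.surjective {N : Submodule A M} (hN : IsSuperfluous N) (f : M →ₗ[A] M)
    (h : ∀ x, ∃ y, x - f y ∈ N) : Function.Surjective f := by
  refine LinearMap.range_eq_top.1 (hN _ (eq_top_iff.2 fun x _ => ?_))
  obtain ⟨y, hy⟩ := h x
  exact Submodule.mem_sup.2 ⟨f y, ⟨y, rfl⟩, _, hy, add_sub_cancel _ _⟩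

variable (M) in
/-- Every map `P₁ → M` factors through `f : P₁ → P₀`. For a projective presentation
`P₁ → P₀ → M → 0` this is the condition defining the τ-rigidity of `M`. -/
def ExtendsAlong (f : P₁ →ₗ[A] P₀) : Prop :=
  ∀ h : P₁ →ₗ[A] M, ∃ k : P₀ →ₗ[A] M, k ∘ₗ f = h

theorem exists_lift_of_exact [Module.Projective A P₁] {f : Q₁ →ₗ[A] Q₀} {g : Q₀ →ₗ[A] M}
    (hfg : Function.Exact f g) (h : P₁ →ₗ[A] Q₀) (hgh : ∀ x, g (h x) = 0) :
    ∃ φ : P₁ →ₗ[A] Q₁, ∀ x, f (φ x) = h x := by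
  obtain ⟨φ, hφ⟩ := Module.projective_lifting_property f.rangeRestrict
    (h.codRestrict f.range fun x => (hfg _).1 (hgh x)) f.surjective_rangeRestrict
  exact ⟨φ, fun x => congrArg Subtype.val (LinearMap.congr_fun hφ x)⟩

/-- The comparison maps `φ` and `ψ` between the two presentations compose to an automorphism of
the minimal one. -/
theorem ExtendsAlong.of_minimal [Module.Projective A P₀] [Module.Projective A P₁]
    [Module.Projective A Q₀] [Module.Projective A Q₁] [IsNoetherian A Q₁]
    {f : P₁ →ₗ[A] P₀} {g : P₀ →ₗ[A] M} (hg : Function.Surjective g) (hfg : Function.Exact f g)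
    (hf : ExtendsAlong M f) {f' : Q₁ →ₗ[A] Q₀} {g' : Q₀ →ₗ[A] M} (hg' : Function.Surjective g')
    (hfg' : Function.Exact f' g') (hker_g' : IsSuperfluous g'.ker)
    (hker_f' : IsSuperfluous f'.ker) : ExtendsAlong M f' := by
  obtain ⟨φ₀, hφ₀⟩ := Module.projective_lifting_property g g' hg
  obtain ⟨ψ₀, hψ₀⟩ := Module.projective_lifting_property g' g hg'
  have gφ (x) : g (φ₀ x) = g' x := LinearMap.congr_fun hφ₀ x
  have gψ (x) : g' (ψ₀ x) = g x := LinearMap.congr_fun hψ₀ x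
  obtain ⟨φ₁, hφ₁⟩ := exists_lift_of_exact hfg (φ₀ ∘ₗ f') fun x => by
    simp [gφ, hfg'.apply_apply_eq_zero]
  obtain ⟨ψ₁, hψ₁⟩ := exists_lift_of_exact hfg' (ψ₀ ∘ₗ f) fun x => by
    simp [gψ, hfg.apply_apply_eq_zero]
  have h₀ : Function.Surjective (ψ₀ ∘ₗ φ₀) :=
    hker_g'.surjective _ fun x => ⟨x, by simp [gφ, gψ]⟩
  have h₁ : Function.Surjective (ψ₁ ∘ₗ φ₁) := hker_f'.surjective _ fun y => by
    obtain ⟨x, hx⟩ := h₀ (f' y)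
    obtain ⟨z, rfl⟩ := (hfg' x).1 (by
      rw [← gφ, ← gψ, ← LinearMap.comp_apply ψ₀, hx, hfg'.apply_apply_eq_zero])
    exact ⟨z, by simpa [hψ₁, hφ₁, sub_eq_zero] using hx.symm⟩
  let θ := LinearEquiv.ofBijective _ (IsNoetherian.bijective_of_surjective_endomorphism _ h₁)
  intro h
  obtain ⟨k, hk⟩ := hf (h ∘ₗ θ.symm.toLinearMap ∘ₗ ψ₁)
  refine ⟨k ∘ₗ φ₀, LinearMap.ext fun x => ?_⟩
  calc k (φ₀ (f' x)) = k (f (φ₁ x)) := by rw [hφ₁, LinearMap.comp_apply]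
    _ = h (θ.symm (ψ₁ (φ₁ x))) := LinearMap.congr_fun hk (φ₁ x)
    _ = h x := congrArg h (θ.symm_apply_apply x)

end Superfluous

section TauRigid

variable (R) in
/-- Unbundled form of `IsTauRigidMod`. -/
def IsTauRigid (M : Type) [AddCommGroup M] [Module R M] : Prop :=
  ∃ (P₁ P₀ : ModCat R) (f : P₁ →ₗ[R] P₀) (g : P₀ →ₗ[R] M),
    Module.Projective R P₁ ∧ Module.Projective R P₀ ∧ Module.Finite R P₁ ∧ Module.Finite R P₀ ∧
    Function.Surjective g ∧ Function.Exact f g ∧ ExtendsAlong M f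

variable (R) in
/-- Unbundled form of `IsTauRigidPairMod`. -/
def IsTauRigidPair (M P : Type) [AddCommGroup M] [Module R M] [AddCommGroup P] [Module R P] :
    Prop :=
  Module.Finite R M ∧ IsTauRigid R M ∧ Module.Finite R P ∧ Module.Projective R P ∧
    ∀ f : P →ₗ[R] M, f = 0

variable (R) in
/-- Unbundled form of `IsSupportTauTiltingMod`. -/
def IsSupportTauTilting (M : Type) [AddCommGroup M] [Module R M] : Prop :=
  ∃ P : ModCat R, IsTauRigidPair R M P ∧
    ∀ N Q : ModCat R, IsTauRigidPair R (M × N) (P × Q) → IsMemAdd R N M ∧ IsMemAdd R Q P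

theorem isTauRigidMod_iff (M : ModCat R) : IsTauRigidMod M ↔ IsTauRigid R M := by
  constructor
  · rintro ⟨P₁, P₀, f, g, h₁, h₀, hfin₁, hfin₀, hg, hfg, hf⟩
    refine ⟨P₁, P₀, f.hom, g.hom, (IsProjective.iff_projective P₁).2 h₁,
      (IsProjective.iff_projective P₀).2 h₀, hfin₁, hfin₀, hg, hfg, fun h => ?_⟩
    obtain ⟨k, hk⟩ := hf (ModuleCat.ofHom h)
    exact ⟨k.hom, congrArg ModuleCat.Hom.hom hk⟩
  · rintro ⟨P₁, P₀, f, g, h₁, h₀, hfin₁, hfin₀, hg, hfg, hf⟩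
    refine ⟨P₁, P₀, ModuleCat.ofHom f, ModuleCat.ofHom g, (IsProjective.iff_projective P₁).1 h₁,
      (IsProjective.iff_projective P₀).1 h₀, hfin₁, hfin₀, hg, hfg, fun h => ?_⟩
    obtain ⟨k, hk⟩ := hf h.hom
    exact ⟨ModuleCat.ofHom k, ModuleCat.hom_ext hk⟩

theorem isTauRigidPairMod_iff (M P : ModCat R) :
    IsTauRigidPairMod M P ↔ IsTauRigidPair R M P := by
  unfold IsTauRigidPairMod IsTauRigidPair IsFGMod
  rw [isTauRigidMod_iff, ← IsProjective.iff_projective P]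
  have : (∀ f : P ⟶ M, f = 0) ↔ ∀ f : P →ₗ[R] M, f = 0 :=
    ⟨fun h f => congrArg ModuleCat.Hom.hom (h (ModuleCat.ofHom f)),
      fun h f => ModuleCat.hom_ext (h f.hom)⟩
  rw [this]

theorem memAddMod_iff (N M : ModCat R) : MemAddMod N M ↔ IsMemAdd R N M := by
  have e (k : ℕ) : (⨁ fun _ : Fin k => M : ModCat R) ≃ₗ[R] (Fin k → M) :=
    (ModuleCat.biproductIsoPi fun _ : Fin k => M).toLinearEquiv
  constructor
  · rintro ⟨k, g, h, hgh⟩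
    exact ⟨Fin k, inferInstance,
      .trans ⟨g.hom, h.hom, congrArg ModuleCat.Hom.hom hgh⟩ (.of_equiv (e k))⟩
  · rintro ⟨ι, _, hN⟩
    obtain ⟨k, ⟨q⟩⟩ := Finite.exists_equiv_fin ι
    obtain ⟨i, p, hip⟩ := hN.trans
      (.of_equiv ((LinearEquiv.funCongrLeft R M q.symm).trans (e k).symm))
    exact ⟨k, ModuleCat.ofHom i, ModuleCat.ofHom p, ModuleCat.hom_ext hip⟩

theorem IsTauRigid.congr {M N : Type} [AddCommGroup M] [Module R M] [AddCommGroup N] [Module R N]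
    (h : IsTauRigid R M) (e : M ≃ₗ[R] N) : IsTauRigid R N := by
  obtain ⟨P₁, P₀, f, g, h₁, h₀, hfin₁, hfin₀, hg, hfg, hf⟩ := h
  refine ⟨P₁, P₀, f, e.toLinearMap ∘ₗ g, h₁, h₀, hfin₁, hfin₀, e.surjective.comp hg,
    fun x => by simpa using hfg x, fun h => ?_⟩
  obtain ⟨k, hk⟩ := hf (e.symm.toLinearMap ∘ₗ h)
  exact ⟨e.toLinearMap ∘ₗ k, by rw [LinearMap.comp_assoc, hk]; ext x; simp⟩

theorem IsTauRigidPair.congr {M P N Q : Type} [AddCommGroup M] [Module R M] [AddCommGroup P]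
    [Module R P] [AddCommGroup N] [Module R N] [AddCommGroup Q] [Module R Q]
    (h : IsTauRigidPair R M P) (e : M ≃ₗ[R] N) (e' : P ≃ₗ[R] Q) : IsTauRigidPair R N Q := by
  obtain ⟨hM, hτ, hP, hproj, hhom⟩ := h
  refine ⟨.equiv e, hτ.congr e, .equiv e', .of_equiv e', fun f => ?_⟩
  have := hhom (e.symm.toLinearMap ∘ₗ f ∘ₗ e'.toLinearMap)
  ext x
  simpa using LinearMap.congr_fun this (e'.symm x)

theorem isSupportTauTiltingMod_iff (M : ModCat R) :
    IsSupportTauTiltingMod M ↔ IsSupportTauTilting R M := by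
  refine exists_congr fun P => and_congr (isTauRigidPairMod_iff M P) (forall₂_congr fun N Q => ?_)
  have e (X Y : ModCat R) : (X ⊞ Y : ModCat R) ≃ₗ[R] X × Y :=
    (ModuleCat.biprodIsoProd X Y).toLinearEquiv
  rw [isTauRigidPairMod_iff, memAddMod_iff, memAddMod_iff]
  exact imp_congr_left
    ⟨fun h => h.congr (e _ _) (e _ _), fun h => h.congr (e _ _).symm (e _ _).symm⟩

theorem isBasicMod_iff (M : ModCat R) : IsBasicMod M ↔ IsBasic R M := by
  have e (X Y : ModCat R) : (X ⊞ Y : ModCat R) ≃ₗ[R] X × Y :=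
    (ModuleCat.biprodIsoProd X Y).toLinearEquiv
  have e₃ (N X : ModCat R) : ((N ⊞ N) ⊞ X : ModCat R) ≃ₗ[R] (N × N) × X :=
    (e (N ⊞ N) X).trans ((e N N).prodCongr (.refl R X))
  constructor
  · intro h N X _ _ _ _ ⟨φ⟩
    exact ModuleCat.subsingleton_of_isZero
      (h (.of R N) (.of R X) ⟨(φ.trans (e₃ (.of R N) (.of R X)).symm).toModuleIso⟩)
  · intro h N X ⟨φ⟩
    have := h N X ⟨φ.toLinearEquiv.trans (e₃ N X)⟩
    exact ModuleCat.isZero_of_subsingleton N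

end TauRigid

section TauRigidPair

variable {M N P Q : Type} [AddCommGroup M] [Module R M] [AddCommGroup N] [Module R N]
  [AddCommGroup P] [Module R P] [AddCommGroup Q] [Module R Q]

theorem IsTauRigidPair.of_isRetract_right (h : IsTauRigidPair R M P) (hQ : IsRetract R Q P) :
    IsTauRigidPair R M Q := by
  obtain ⟨hM, hτ, hP, hproj, hhom⟩ := h
  refine ⟨hM, hτ, hQ.finite, ?_, hQ.hom_eq_zero (.of_equiv (.refl R M)) hhom⟩
  obtain ⟨i, p, hip⟩ := hQ
  exact .of_split i p hip

theorem isTauRigidPair_of_subsingleton_right [Module.Finite R M] [Subsingleton P]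
    (h : IsTauRigid R M) : IsTauRigidPair R M P :=
  ⟨inferInstance, h, inferInstance, inferInstance, fun _ => Subsingleton.elim _ _⟩

end TauRigidPair

section Presentation

variable {P₁ P₀ M P₁' P₀' M' : Type} [AddCommGroup P₁] [Module R P₁] [AddCommGroup P₀]
  [Module R P₀] [AddCommGroup P₁'] [Module R P₁'] [AddCommGroup P₀'] [Module R P₀']
  [AddCommGroup M'] [Module R M'] [AddCommGroup M] [Module R M]

/-- `P₁ → P₀ → M → 0` is a presentation of `M` by finitely generated projective modules. -/
structure IsProjectivePresentation (f : P₁ →ₗ[R] P₀) (g : P₀ →ₗ[R] M) : Prop where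
  projective_left : Module.Projective R P₁ := by infer_instance
  projective_right : Module.Projective R P₀ := by infer_instance
  finite_left : Module.Finite R P₁ := by infer_instance
  finite_right : Module.Finite R P₀ := by infer_instance
  surjective : Function.Surjective g
  exact : Function.Exact f g

theorem isProjectivePresentation_id [Module.Projective R M] [Module.Finite R M] :
    IsProjectivePresentation (0 : PUnit →ₗ[R] M) .id where
  surjective := Function.surjective_id
  exact x := by simp [eq_comm]

theorem extendsAlong_of_subsingleton [Subsingleton P₁] (f : P₁ →ₗ[R] P₀) : ExtendsAlong M f :=
  fun _ => ⟨0, Subsingleton.elim _ _⟩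

theorem IsProjectivePresentation.isTauRigid {f : P₁ →ₗ[R] P₀} {g : P₀ →ₗ[R] M}
    (h : IsProjectivePresentation f g) (hM : ExtendsAlong M f) : IsTauRigid R M :=
  ⟨.of R P₁, .of R P₀, f, g, h.projective_left, h.projective_right, h.finite_left,
    h.finite_right, h.surjective, h.exact, hM⟩

theorem IsProjectivePresentation.isTauRigid_prod {f : P₁ →ₗ[R] P₀} {g : P₀ →ₗ[R] M}
    {f' : P₁' →ₗ[R] P₀'} {g' : P₀' →ₗ[R] M'} (h : IsProjectivePresentation f g)
    (h' : IsProjectivePresentation f' g') (hM : ExtendsAlong M f) (hM' : ExtendsAlong M' f)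
    (hM₁ : ExtendsAlong M f') (hM₁' : ExtendsAlong M' f') : IsTauRigid R (M × M') := by
  have := h.projective_left
  have := h.projective_right
  have := h.finite_left
  have := h.finite_right
  have := h'.projective_left
  have := h'.projective_right
  have := h'.finite_left
  have := h'.finite_right
  refine ⟨.of R (P₁ × P₁'), .of R (P₀ × P₀'), f.prodMap f', g.prodMap g',
    inferInstanceAs (Module.Projective R (P₁ × P₁')),
    inferInstanceAs (Module.Projective R (P₀ × P₀')),
    inferInstanceAs (Module.Finite R (P₁ × P₁')), inferInstanceAs (Module.Finite R (P₀ × P₀')),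
    h.surjective.prodMap h'.surjective, fun x => ?_, fun u => ?_⟩
  · change (g x.1, g' x.2) = 0 ↔ _
    rw [Prod.mk_eq_zero, h.exact, h'.exact]
    constructor
    · rintro ⟨⟨y, hy⟩, ⟨y', hy'⟩⟩
      exact ⟨(y, y'), Prod.ext hy hy'⟩
    · rintro ⟨y, rfl⟩
      exact ⟨⟨y.1, rfl⟩, ⟨y.2, rfl⟩⟩
  · change P₁ × P₁' →ₗ[R] M × M' at u
    obtain ⟨a, ha⟩ := hM (.fst R M M' ∘ₗ u ∘ₗ .inl R P₁ P₁')
    obtain ⟨b, hb⟩ := hM' (.snd R M M' ∘ₗ u ∘ₗ .inl R P₁ P₁')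
    obtain ⟨c, hc⟩ := hM₁ (.fst R M M' ∘ₗ u ∘ₗ .inr R P₁ P₁')
    obtain ⟨d, hd⟩ := hM₁' (.snd R M M' ∘ₗ u ∘ₗ .inr R P₁ P₁')
    refine ⟨(a.prod b).coprod (c.prod d), ?_⟩
    change (a.prod b).coprod (c.prod d) ∘ₗ f.prodMap f' = u
    refine LinearMap.prod_ext (LinearMap.ext fun y => Prod.ext ?_ ?_)
      (LinearMap.ext fun y => Prod.ext ?_ ?_)
    · simpa using LinearMap.congr_fun ha y
    · simpa using LinearMap.congr_fun hb y
    · simpa using LinearMap.congr_fun hc y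
    · simpa using LinearMap.congr_fun hd y

theorem isTauRigid_of_projective [Module.Projective R M] [Module.Finite R M] : IsTauRigid R M :=
  isProjectivePresentation_id.isTauRigid (extendsAlong_of_subsingleton _)

end Presentation

namespace A5

/-- The opposite algebra of `A5 K`; its left modules are the right `A5 K`-modules. -/
abbrev Op (K : Type) [Field K] : Type := (A5 K)ᵐᵒᵖ

/-- The defining relations of `A5`, for five elements of a ring in which multiplication is
composition of maps, that is, opposite to concatenation of paths. -/
structure Relations {B : Type*} [Ring B] (e₁ e₂ α γ β : B) : Prop where
  e₁_mul_e₁ : e₁ * e₁ = e₁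
  e₁_mul_e₂ : e₁ * e₂ = 0
  e₂_mul_e₁ : e₂ * e₁ = 0
  e₂_mul_e₂ : e₂ * e₂ = e₂
  e₁_add_e₂ : e₁ + e₂ = 1
  e₁_mul_α_mul_e₁ : e₁ * (α * e₁) = α
  e₂_mul_γ_mul_e₁ : e₂ * (γ * e₁) = γ
  e₁_mul_β_mul_e₂ : e₁ * (β * e₂) = β
  β_mul_γ : β * γ = α * α
  γ_mul_α_mul_β : γ * (α * β) = 0

section Generators

variable (K : Type) [Field K]

/-- The quotient map onto `A5 K`. -/
def proj : FreeAlgebra K (Fin 5) →ₐ[K] A5 K := RingQuot.mkAlgHom K (A5Rel K)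

/-- The quotient map onto `A5 K`, read in the opposite algebra. -/
def mk (x : FreeAlgebra K (Fin 5)) : Op K := .op (proj K x)

/-- The idempotent of vertex `1`. -/
def e₁ : Op K := mk K (.ι K 0)

/-- The idempotent of vertex `2`. -/
def e₂ : Op K := mk K (.ι K 1)

/-- The loop at vertex `1`. -/
def α : Op K := mk K (.ι K 2)

/-- The arrow from vertex `1` to vertex `2`. -/
def γ : Op K := mk K (.ι K 3)

/-- The arrow from vertex `2` to vertex `1`. -/
def β : Op K := mk K (.ι K 4)

theorem mk_add (x y : FreeAlgebra K (Fin 5)) : mk K (x + y) = mk K x + mk K y := by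
  rw [mk, map_add, MulOpposite.op_add, mk, mk]

theorem mk_mul (x y : FreeAlgebra K (Fin 5)) : mk K (x * y) = mk K y * mk K x := by
  rw [mk, map_mul, MulOpposite.op_mul, mk, mk]

theorem mk_algebraMap (c : K) : mk K (algebraMap K _ c) = algebraMap K (Op K) c :=
  congrArg MulOpposite.op ((proj K).commutes c)

theorem mk_surjective : Function.Surjective (mk K) := fun r => by
  obtain ⟨x, hx⟩ := RingQuot.mkAlgHom_surjective K (A5Rel K) r.unop
  exact ⟨x, congrArg MulOpposite.op hx⟩

variable {K} in
theorem mk_eq_mk {x y : FreeAlgebra K (Fin 5)} (h : A5Rel K x y) : mk K x = mk K y :=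
  congrArg MulOpposite.op (RingQuot.mkAlgHom_rel K h)

theorem relations : Relations (e₁ K) (e₂ K) (α K) (γ K) (β K) := by
  have h0 : mk K 0 = 0 := congrArg MulOpposite.op (map_zero (proj K))
  have h1 : mk K 1 = 1 := congrArg MulOpposite.op (map_one (proj K))
  constructor <;> simp only [e₁, e₂, α, γ, β, ← mk_mul, ← mk_add, ← h0, ← h1]
  case e₁_mul_α_mul_e₁ | e₂_mul_γ_mul_e₁ | e₁_mul_β_mul_e₂ | β_mul_γ =>
    exact (mk_eq_mk (by simp [A5Rel])).symm
  all_goals exact mk_eq_mk (by simp [A5Rel])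

@[elab_as_elim]
theorem induction {P : Op K → Prop} (algebraMap : ∀ c : K, P (algebraMap K (Op K) c))
    (e₁ : P (e₁ K)) (e₂ : P (e₂ K)) (α : P (α K)) (γ : P (γ K)) (β : P (β K))
    (add : ∀ x y, P x → P y → P (x + y)) (mul : ∀ x y, P x → P y → P (x * y)) (r : Op K) :
    P r := by
  obtain ⟨x, rfl⟩ := mk_surjective K r
  induction x using FreeAlgebra.induction with
  | grade0 c => rw [mk_algebraMap]; exact algebraMap c
  | grade1 i => fin_cases i <;> assumption
  | mul a b ha hb => rw [mk_mul]; exact mul _ _ hb ha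
  | add a b ha hb => rw [mk_add]; exact add _ _ ha hb

end Generators

section Lift

variable {K : Type} [Field K] {B : Type*} [Ring B] [Algebra K B] {e₁ e₂ α γ β : B}

/-- The universal property of `A5`. -/
def lift (h : Relations e₁ e₂ α γ β) : Op K →ₐ[K] B :=
  AlgHom.opComm <| RingQuot.liftAlgHom K (s := A5Rel K)
    ⟨FreeAlgebra.lift K fun i => MulOpposite.op (![e₁, e₂, α, γ, β] i), by
      intro x y hxy
      simp only [A5Rel, List.mem_cons, Prod.mk.injEq, List.not_mem_nil, or_false] at hxy
      rcases hxy with ⟨rfl, rfl⟩ | ⟨rfl, rfl⟩ | ⟨rfl, rfl⟩ | ⟨rfl, rfl⟩ | ⟨rfl, rfl⟩ | ⟨rfl, rfl⟩ |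
        ⟨rfl, rfl⟩ | ⟨rfl, rfl⟩ | ⟨rfl, rfl⟩ | ⟨rfl, rfl⟩ <;>
      simp [← MulOpposite.op_mul, ← MulOpposite.op_add, h.e₁_mul_e₁, h.e₁_mul_e₂, h.e₂_mul_e₁,
        h.e₂_mul_e₂, h.e₁_add_e₂, h.e₁_mul_α_mul_e₁, h.e₂_mul_γ_mul_e₁, h.e₁_mul_β_mul_e₂,
        h.β_mul_γ, h.γ_mul_α_mul_β]⟩

theorem lift_mk_ι (h : Relations e₁ e₂ α γ β) (i : Fin 5) :
    lift h (mk K (.ι K i)) = ![e₁, e₂, α, γ, β] i := by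
  refine congrArg MulOpposite.unop
    ((RingQuot.liftAlgHom_mkAlgHom_apply K _ _ (FreeAlgebra.ι K i)).trans
      (FreeAlgebra.lift_ι_apply _ i))

end Lift

end A5

namespace A5

variable {K : Type} [Field K] {M N : Type} [AddCommGroup M] [Module (Op K) M]
  [AddCommGroup N] [Module (Op K) N]

section Action

variable (m : M)

theorem e₁_smul_add_e₂_smul : e₁ K • m + e₂ K • m = m := by
  rw [← add_smul, (relations K).e₁_add_e₂, one_smul]

@[simp]
theorem e₁_smul_e₁_smul : e₁ K • e₁ K • m = e₁ K • m := by
  rw [smul_smul, (relations K).e₁_mul_e₁]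

@[simp]
theorem e₁_smul_e₂_smul : e₁ K • e₂ K • m = 0 := by
  rw [smul_smul, (relations K).e₁_mul_e₂, zero_smul]

@[simp]
theorem e₂_smul_e₁_smul : e₂ K • e₁ K • m = 0 := by
  rw [smul_smul, (relations K).e₂_mul_e₁, zero_smul]

@[simp]
theorem e₂_smul_e₂_smul : e₂ K • e₂ K • m = e₂ K • m := by
  rw [smul_smul, (relations K).e₂_mul_e₂]

theorem α_smul_eq : α K • m = e₁ K • α K • e₁ K • m := by
  simp only [smul_smul, (relations K).e₁_mul_α_mul_e₁]

theorem γ_smul_eq : γ K • m = e₂ K • γ K • e₁ K • m := by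
  simp only [smul_smul, (relations K).e₂_mul_γ_mul_e₁]

theorem β_smul_eq : β K • m = e₁ K • β K • e₂ K • m := by
  simp only [smul_smul, (relations K).e₁_mul_β_mul_e₂]

@[simp]
theorem e₁_smul_α_smul : e₁ K • α K • m = α K • m := by rw [α_smul_eq, e₁_smul_e₁_smul]

@[simp]
theorem α_smul_e₁_smul : α K • e₁ K • m = α K • m := by
  rw [α_smul_eq, e₁_smul_e₁_smul, ← α_smul_eq]

@[simp]
theorem e₂_smul_α_smul : e₂ K • α K • m = 0 := by rw [α_smul_eq, e₂_smul_e₁_smul]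

@[simp]
theorem α_smul_e₂_smul : α K • e₂ K • m = 0 := by
  rw [α_smul_eq, e₁_smul_e₂_smul, smul_zero, smul_zero]

@[simp]
theorem e₂_smul_γ_smul : e₂ K • γ K • m = γ K • m := by rw [γ_smul_eq, e₂_smul_e₂_smul]

@[simp]
theorem γ_smul_e₁_smul : γ K • e₁ K • m = γ K • m := by
  rw [γ_smul_eq, e₁_smul_e₁_smul, ← γ_smul_eq]

@[simp]
theorem e₁_smul_γ_smul : e₁ K • γ K • m = 0 := by rw [γ_smul_eq, e₁_smul_e₂_smul]

@[simp]
theorem γ_smul_e₂_smul : γ K • e₂ K • m = 0 := by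
  rw [γ_smul_eq, e₁_smul_e₂_smul, smul_zero, smul_zero]

@[simp]
theorem e₁_smul_β_smul : e₁ K • β K • m = β K • m := by rw [β_smul_eq, e₁_smul_e₁_smul]

@[simp]
theorem β_smul_e₂_smul : β K • e₂ K • m = β K • m := by
  rw [β_smul_eq, e₂_smul_e₂_smul, ← β_smul_eq]

@[simp]
theorem e₂_smul_β_smul : e₂ K • β K • m = 0 := by rw [β_smul_eq, e₂_smul_e₁_smul]

@[simp]
theorem β_smul_e₁_smul : β K • e₁ K • m = 0 := by
  rw [β_smul_eq, e₂_smul_e₁_smul, smul_zero, smul_zero]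

@[simp]
theorem α_smul_γ_smul : α K • γ K • m = 0 := by rw [← e₂_smul_γ_smul, α_smul_e₂_smul]

@[simp]
theorem γ_smul_γ_smul : γ K • γ K • m = 0 := by rw [← e₂_smul_γ_smul m, γ_smul_e₂_smul]

@[simp]
theorem β_smul_β_smul : β K • β K • m = 0 := by rw [← e₁_smul_β_smul m, β_smul_e₁_smul]

@[simp]
theorem β_smul_α_smul : β K • α K • m = 0 := by rw [← e₁_smul_α_smul, β_smul_e₁_smul]

@[simp]
theorem β_smul_γ_smul : β K • γ K • m = α K • α K • m := by
  rw [smul_smul, (relations K).β_mul_γ, mul_smul]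

@[simp]
theorem γ_smul_α_smul_β_smul : γ K • α K • β K • m = 0 := by
  rw [smul_smul, smul_smul, mul_assoc, (relations K).γ_mul_α_mul_β, zero_smul]

@[simp]
theorem α_cube_smul_β_smul : α K • α K • α K • β K • m = 0 := by
  rw [← β_smul_γ_smul, γ_smul_α_smul_β_smul, smul_zero]

@[simp]
theorem γ_smul_α_cube_smul : γ K • α K • α K • α K • m = 0 := by
  rw [← β_smul_γ_smul m, γ_smul_α_smul_β_smul]

@[simp]
theorem α_pow_five_smul : α K • α K • α K • α K • α K • m = 0 := by
  rw [← β_smul_γ_smul m, α_cube_smul_β_smul]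

theorem e₂_smul_of_e₁_smul_eq_zero {m : M} (h : e₁ K • m = 0) : e₂ K • m = m := by
  simpa [h] using e₁_smul_add_e₂_smul (K := K) m

end Action

section Radical

variable (K M) in
/-- The radical of `M`, generated by the images of the three arrows. -/
def rad : Submodule (Op K) M where
  carrier := {m | ∃ x y z : M, m = α K • x + γ K • y + β K • z}
  zero_mem' := ⟨0, 0, 0, by simp⟩
  add_mem' := by
    rintro _ _ ⟨x, y, z, rfl⟩ ⟨x', y', z', rfl⟩
    exact ⟨x + x', y + y', z + z', by simp only [smul_add]; abel⟩
  smul_mem' r := by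
    induction r using A5.induction K with
    | algebraMap c =>
      rintro _ ⟨x, y, z, rfl⟩
      have (s : Op K) (m : M) : algebraMap K (Op K) c • s • m = s • algebraMap K (Op K) c • m := by
        rw [smul_smul, Algebra.commutes, mul_smul]
      exact ⟨algebraMap K (Op K) c • x, algebraMap K (Op K) c • y, algebraMap K (Op K) c • z,
        by simp only [smul_add, this]⟩
    | e₁ => rintro _ ⟨x, y, z, rfl⟩; exact ⟨x, 0, z, by simp⟩
    | e₂ => rintro _ ⟨x, y, z, rfl⟩; exact ⟨0, y, 0, by simp⟩
    | α => exact fun {m} _ => ⟨m, 0, 0, by simp only [smul_zero, add_zero]⟩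
    | γ => exact fun {m} _ => ⟨0, m, 0, by simp only [smul_zero, add_zero, zero_add]⟩
    | β => exact fun {m} _ => ⟨0, 0, m, by simp only [smul_zero, zero_add]⟩
    | add r s hr hs =>
      intro m hm
      obtain ⟨x, y, z, h⟩ := hr hm
      obtain ⟨x', y', z', h'⟩ := hs hm
      exact ⟨x + x', y + y', z + z', by rw [add_smul, h, h']; simp only [smul_add]; abel⟩
    | mul r s hr hs => intro m hm; rw [mul_smul]; exact hr (hs hm)

theorem mem_rad {m : M} : m ∈ rad K M ↔ ∃ x y z : M, m = α K • x + γ K • y + β K • z :=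
  Iff.rfl

theorem map_mem_rad (f : M →ₗ[Op K] N) {m : M} (hm : m ∈ rad K M) : f m ∈ rad K N := by
  obtain ⟨x, y, z, rfl⟩ := hm
  exact ⟨f x, f y, f z, by simp⟩

theorem exists_mem_rad_map_eq {f : M →ₗ[Op K] N} (hf : Function.Surjective f) {n : N}
    (hn : n ∈ rad K N) : ∃ m ∈ rad K M, f m = n := by
  obtain ⟨x, y, z, rfl⟩ := hn
  obtain ⟨x, rfl⟩ := hf x
  obtain ⟨y, rfl⟩ := hf y
  obtain ⟨z, rfl⟩ := hf z
  exact ⟨α K • x + γ K • y + β K • z, ⟨x, y, z, rfl⟩, by simp⟩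

theorem e₁_smul_eq_zero_of_forall_exists (h : ∀ m : M, ∃ n, e₁ K • m = α K • n) (m : M) :
    e₁ K • m = 0 := by
  have hα (m : M) : ∃ n, α K • m = α K • α K • n := by
    obtain ⟨n, hn⟩ := h m
    exact ⟨n, by rw [← hn, α_smul_e₁_smul]⟩
  obtain ⟨n₁, h₁⟩ := h m
  obtain ⟨n₂, h₂⟩ := hα n₁
  obtain ⟨n₃, h₃⟩ := hα n₂
  obtain ⟨n₄, h₄⟩ := hα n₃
  obtain ⟨n₅, h₅⟩ := hα n₄
  rw [h₁, h₂, h₃, h₄, h₅, α_pow_five_smul]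

/-- A Nakayama lemma without finiteness, the radical of `A5` being nilpotent. -/
theorem subsingleton_of_rad_eq_top (h : rad K M = ⊤) : Subsingleton M := by
  have hrad (m : M) : ∃ x y z : M, m = α K • x + γ K • y + β K • z := by
    rw [← mem_rad, h]; trivial
  have he₁α (m : M) : ∃ m', e₁ K • m = α K • m' := by
    obtain ⟨x, y, z, rfl⟩ := hrad m
    obtain ⟨x', y', z', hz⟩ := hrad z
    have hβz : β K • z = α K • α K • y' := by simp [hz]
    exact ⟨x + α K • y', by simp [hβz]⟩
  have he₁ := e₁_smul_eq_zero_of_forall_exists he₁α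
  have hα0 (m : M) : α K • m = 0 := by rw [← e₁_smul_α_smul, he₁]
  have hβ0 (m : M) : β K • m = 0 := by rw [← e₁_smul_β_smul, he₁]
  have hγ0 (m : M) : γ K • m = 0 := by rw [← γ_smul_e₁_smul, he₁, smul_zero]
  refine subsingleton_of_forall_eq 0 fun m => ?_
  obtain ⟨x, y, z, rfl⟩ := hrad m
  simp [hα0, hβ0, hγ0]

theorem isSuperfluous_of_le_rad {L : Submodule (Op K) M} (h : L ≤ rad K M) : IsSuperfluous L := by
  intro N hN
  rw [← Submodule.Quotient.subsingleton_iff]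
  refine subsingleton_of_rad_eq_top (K := K) (eq_top_iff.2 fun q _ => ?_)
  obtain ⟨m, rfl⟩ := N.mkQ_surjective q
  obtain ⟨n, hn, l, hl, rfl⟩ := Submodule.mem_sup.1 (hN ▸ Submodule.mem_top : m ∈ N ⊔ L)
  rw [map_add, (LinearMap.mem_ker (f := N.mkQ)).1 (by rwa [Submodule.ker_mkQ]), zero_add]
  exact map_mem_rad _ (h hl)

theorem surjective_of_range_sup_rad_eq_top (f : N →ₗ[Op K] M)
    (h : ∀ m, ∃ n, m - f n ∈ rad K M) : Function.Surjective f := by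
  refine LinearMap.range_eq_top.1 (isSuperfluous_of_le_rad le_rfl _ (eq_top_iff.2 fun m _ => ?_))
  obtain ⟨n, hn⟩ := h m
  exact Submodule.mem_sup.2 ⟨f n, ⟨n, rfl⟩, _, hn, add_sub_cancel _ _⟩

end Radical

section OfLinearMap

variable [Module K M] [IsScalarTower K (Op K) M] [Module K N] [IsScalarTower K (Op K) N]

/-- A `K`-linear map commuting with the generators, as an `Op K`-linear map. -/
def ofLinearMap (f : M →ₗ[K] N) (he₁ : ∀ m, f (e₁ K • m) = e₁ K • f m)
    (hα : ∀ m, f (α K • m) = α K • f m) (hγ : ∀ m, f (γ K • m) = γ K • f m)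
    (hβ : ∀ m, f (β K • m) = β K • f m) : M →ₗ[Op K] N where
  toFun := f
  map_add' := map_add f
  map_smul' r := by
    change ∀ m, f (r • m) = r • f m
    induction r using A5.induction K with
    | algebraMap c => intro m; rw [algebraMap_smul, map_smul, algebraMap_smul]
    | e₁ => exact he₁
    | e₂ =>
      intro m
      refine add_left_cancel (a := e₁ K • f m) ?_
      rw [← he₁, ← map_add, e₁_smul_add_e₂_smul, he₁, e₁_smul_add_e₂_smul]
    | α => exact hα
    | γ => exact hγ
    | β => exact hβ
    | add r s hr hs => intro m; rw [add_smul, map_add, hr, hs, add_smul]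
    | mul r s hr hs => intro m; rw [mul_smul, hr, hs, mul_smul]

@[simp]
theorem ofLinearMap_apply (f : M →ₗ[K] N) (he₁ hα hγ hβ) (m : M) :
    ofLinearMap f he₁ hα hγ hβ m = f m := rfl

end OfLinearMap

end A5

namespace A5

/-- A combinatorial description of a representation of `A5`: a finite basis, distributed over the
two vertices, on which every arrow acts as a partial injection. The three arrows are encoded by
preimages: `α i = some j` means that the loop sends the `j`-th basis vector to the `i`-th one, and
`α i = none` that no basis vector is sent to the `i`-th one. -/
structure Shape (n : ℕ) where
  /-- Whether a basis vector lies at vertex `1`. -/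
  isOne : Fin n → Bool
  /-- Preimages under the loop `α`. -/
  α : Fin n → Option (Fin n)
  /-- Preimages under the arrow `γ`. -/
  γ : Fin n → Option (Fin n)
  /-- Preimages under the arrow `β`. -/
  β : Fin n → Option (Fin n)
  isOne_of_α : ∀ i j, α i = some j → isOne i = true ∧ isOne j = true := by decide
  isOne_of_γ : ∀ i j, γ i = some j → isOne i = false ∧ isOne j = true := by decide
  isOne_of_β : ∀ i j, β i = some j → isOne i = true ∧ isOne j = false := by decide
  bind_α_eq_bind_γ : ∀ i, (α i).bind α = (β i).bind γ := by decide
  bind_bind_eq_none : ∀ i, (γ i).bind (fun j => (α j).bind β) = none := by decide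

section Pull

variable {K V : Type} [Field K] [AddCommGroup V] [Module K V] {n : ℕ}

/-- Pullback of coordinates along a partial map. -/
def pull (p : Fin n → Option (Fin n)) : Module.End K (Fin n → V) where
  toFun x i := (p i).elim 0 x
  map_add' x y := by ext i; cases h : p i <;> simp [h]
  map_smul' c x := by ext i; cases h : p i <;> simp [h]

theorem pull_apply (p : Fin n → Option (Fin n)) (x : Fin n → V) (i : Fin n) :
    pull (K := K) p x i = (p i).elim 0 x := rfl

theorem pull_mul_pull (p q : Fin n → Option (Fin n)) :
    (pull p * pull q : Module.End K (Fin n → V)) = pull fun i => (p i).bind q := by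
  refine LinearMap.ext fun x => funext fun i => ?_
  cases h : p i <;> simp [Module.End.mul_apply, pull_apply, h]

theorem pull_none : pull (fun _ => none) = (0 : Module.End K (Fin n → V)) := rfl

theorem Shape.relations (S : Shape n) :
    Relations (pull fun i => if S.isOne i then some i else none)
      (pull fun i => if S.isOne i then none else some i) (pull S.α) (pull S.γ)
      (pull S.β : Module.End K (Fin n → V)) := by
  constructor
  case e₁_add_e₂ =>
    refine LinearMap.ext fun x => funext fun i => ?_
    cases h : S.isOne i <;> simp [pull_apply, h]
  all_goals simp only [pull_mul_pull, ← pull_none]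
  all_goals refine congrArg pull (funext fun i => ?_)
  case β_mul_γ => exact (S.bind_α_eq_bind_γ i).symm
  case γ_mul_α_mul_β => exact S.bind_bind_eq_none i
  case e₁_mul_α_mul_e₁ => cases h : S.α i <;> simp [S.isOne_of_α i _, h]
  case e₂_mul_γ_mul_e₁ => cases h : S.γ i <;> simp [S.isOne_of_γ i _, h]
  case e₁_mul_β_mul_e₂ => cases h : S.β i <;> simp [S.isOne_of_β i _, h]
  all_goals cases h : S.isOne i <;> simp [h]

end Pull

/-- The representation of shape `S` with multiplicity space `V`: the tensor product of `V` with the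
representation described by `S`, given by coordinates in `V`. -/
@[ext]
structure Rep {n : ℕ} (S : Shape n) (V : Type) : Type where
  /-- The family of coordinates. -/
  coord : Fin n → V

namespace Rep

instance {n : ℕ} {S : Shape n} {V : Type} : CoeFun (Rep S V) fun _ => Fin n → V := ⟨coord⟩

variable {n : ℕ} {S : Shape n} {K V : Type} [Field K] [AddCommGroup V] [Module K V]

theorem ext_coord {V : Type} {x y : Rep S V} (h : ∀ i, x i = y i) : x = y := Rep.ext (funext h)

/-- The underlying family of coordinates, as an equivalence. -/
def equivFun (V : Type) : Rep S V ≃ (Fin n → V) := ⟨coord, mk, fun _ => rfl, fun _ => rfl⟩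

instance [Unique V] : Unique (Rep S V) := (equivFun V).unique

instance : AddCommGroup (Rep S V) := (equivFun V).addCommGroup

instance : Module K (Rep S V) := (equivFun V).module K

variable (S K V) in
/-- The underlying family of coordinates, as a linear equivalence. -/
def linearEquivFun : Rep S V ≃ₗ[K] (Fin n → V) := (equivFun V).linearEquiv K

instance [Module.Finite K V] : Module.Finite K (Rep S V) :=
  Module.Finite.equiv (linearEquivFun S K V).symm

instance [NeZero n] [Nontrivial V] : Nontrivial (Rep S V) := (equivFun V).nontrivial

instance : Module (Op K) (Rep S V) :=
  Module.compHom (Rep S V) <| AlgHom.toRingHom <|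
    ((linearEquivFun S K V).symm.conjAlgEquiv K).toAlgHom.comp (lift S.relations)

theorem op_smul_def (r : Op K) (x : Rep S V) :
    r • x = ⟨lift (S.relations (K := K) (V := V)) r x⟩ := rfl

instance : IsScalarTower K (Op K) (Rep S V) where
  smul_assoc c r x := by rw [op_smul_def, op_smul_def, map_smul]; rfl

instance [Module.Finite K V] : Module.Finite (Op K) (Rep S V) :=
  Module.Finite.of_restrictScalars_finite K (Op K) _

theorem finrank_eq [Module.Finite K V] :
    Module.finrank K (Rep S V) = n * Module.finrank K V := by
  simp [(linearEquivFun S K V).finrank_eq, Module.finrank_pi_fintype]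

@[simp]
theorem zero_apply (i : Fin n) : (0 : Rep S V) i = 0 := rfl

@[simp]
theorem add_apply (x y : Rep S V) (i : Fin n) : (x + y) i = x i + y i := rfl

@[simp]
theorem sub_apply (x y : Rep S V) (i : Fin n) : (x - y) i = x i - y i := rfl

@[simp]
theorem neg_apply (x : Rep S V) (i : Fin n) : (-x) i = -x i := rfl

@[simp]
theorem smul_apply (c : K) (x : Rep S V) (i : Fin n) : (c • x) i = c • x i := rfl

theorem mk_ι_smul_apply (k : Fin 5) (x : Rep S V) (i : Fin n) :
    (A5.mk K (.ι K k) • x) i = (![fun i => if S.isOne i then some i else none,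
      fun i => if S.isOne i then none else some i, S.α, S.γ, S.β] k i).elim 0 x.coord := by
  rw [op_smul_def, lift_mk_ι]
  fin_cases k <;> rfl

@[simp]
theorem e₁_smul_apply (x : Rep S V) (i : Fin n) :
    (e₁ K • x) i = if S.isOne i then x i else 0 := by
  rw [e₁, mk_ι_smul_apply]
  cases h : S.isOne i <;> simp [h]

@[simp]
theorem e₂_smul_apply (x : Rep S V) (i : Fin n) :
    (e₂ K • x) i = if S.isOne i then 0 else x i := by
  rw [e₂, mk_ι_smul_apply]
  cases h : S.isOne i <;> simp [h]

@[simp]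
theorem α_smul_apply (x : Rep S V) (i : Fin n) : (α K • x) i = (S.α i).elim 0 x.coord :=
  mk_ι_smul_apply 2 x i

@[simp]
theorem γ_smul_apply (x : Rep S V) (i : Fin n) : (γ K • x) i = (S.γ i).elim 0 x.coord :=
  mk_ι_smul_apply 3 x i

@[simp]
theorem β_smul_apply (x : Rep S V) (i : Fin n) : (β K • x) i = (S.β i).elim 0 x.coord :=
  mk_ι_smul_apply 4 x i

variable (S K V) in
/-- The inclusion of `V` as the `i`-th coordinate. -/
def single (i : Fin n) : V →ₗ[K] Rep S V :=
  (linearEquivFun S K V).symm.toLinearMap ∘ₗ LinearMap.single K (fun _ => V) i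

@[simp]
theorem single_apply (i j : Fin n) (v : V) : single S K V i v j = if j = i then v else 0 :=
  Pi.single_apply i v j

variable (S K V) in
/-- A basis of `V` splits `Rep S V` into copies of `Rep S K`. -/
def equivPi [Module.Finite K V] :
    Rep S V ≃ₗ[Op K] (Fin (Module.finrank K V) → Rep S K) :=
  let b := (Module.finBasis K V).equivFun
  { ofLinearMap (M := Rep S V) (N := Fin (Module.finrank K V) → Rep S K)
      { toFun := fun x k => ⟨fun i => b (x i) k⟩
        map_add' x y := by ext; simp
        map_smul' c x := by ext; simp }
      (fun x => by ext k i; cases h : S.isOne i <;> simp [h])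
      (fun x => by ext k i; cases h : S.α i <;> simp [h])
      (fun x => by ext k i; cases h : S.γ i <;> simp [h])
      (fun x => by ext k i; cases h : S.β i <;> simp [h]) with
    invFun y := ⟨fun i => b.symm fun k => y k i⟩
    left_inv x := ext_coord fun i => b.symm_apply_apply (x i)
    right_inv y := funext fun k => ext_coord fun i => congrFun (b.apply_symm_apply _) k }

end Rep

end A5

namespace A5

namespace Shape

/-- The indecomposable projective at vertex `1`, with basis
`e₁, α, α², α³, α⁴, γ, γα, γα²`. -/
@[simps]
def P₁ : Shape 8 where
  isOne := ![true, true, true, true, true, false, false, false]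
  α := ![none, some 0, some 1, some 2, some 3, none, none, none]
  γ := ![none, none, none, none, none, some 0, some 1, some 2]
  β := ![none, none, some 5, some 6, some 7, none, none, none]

/-- The indecomposable projective at vertex `2`, with basis
`e₂, γβ, γα²β, β, αβ, α²β`. -/
@[simps]
def P₂ : Shape 6 where
  isOne := ![false, false, false, true, true, true]
  α := ![none, none, none, none, some 3, some 4]
  γ := ![none, some 3, some 5, none, none, none]
  β := ![none, none, none, some 0, none, some 1]

/-- The quotient of `P₁` by `γ`, with basis `e₁, α, γα`. -/
@[simps]
def X : Shape 3 where
  isOne := ![true, true, false]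
  α := ![none, some 0, none]
  γ := ![none, none, some 1]
  β := ![none, none, none]

/-- The quotient of `P₁` by `γ` and `γα`, with basis `e₁, α`. -/
@[simps]
def Y : Shape 2 where
  isOne := ![true, true]
  α := ![none, some 0]
  γ := ![none, none]
  β := ![none, none]

/-- The module with two generators `φ, ψ` at vertex `2` and the relation `βφ = αβψ`, with basis
`φ, ψ, γβψ, βψ, αβψ, α²βψ`. -/
@[simps]
def Z : Shape 6 where
  isOne := ![false, false, false, true, true, true]
  α := ![none, none, none, none, some 3, some 4]
  γ := ![none, none, some 3, none, none, none]
  β := ![none, none, none, some 1, some 0, some 2]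

/-- The simple module at vertex `2`. -/
@[simps]
def U : Shape 1 where
  isOne := ![false]
  α := ![none]
  γ := ![none]
  β := ![none]

end Shape

open Shape

section Lift

variable {K : Type} [Field K] {V : Type} [AddCommGroup V] [Module K V]
  {M : Type} [AddCommGroup M] [Module (Op K) M]

section Vertices

variable {m : M}

theorem β_smul_of_e₁_smul_eq (h : e₁ K • m = m) : β K • m = 0 := by
  rw [← h, β_smul_e₁_smul]

theorem e₁_smul_of_e₂_smul_eq (h : e₂ K • m = m) : e₁ K • m = 0 := by
  rw [← h, e₁_smul_e₂_smul]

theorem α_smul_of_e₂_smul_eq (h : e₂ K • m = m) : α K • m = 0 := by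
  rw [← h, α_smul_e₂_smul]

theorem γ_smul_of_e₂_smul_eq (h : e₂ K • m = m) : γ K • m = 0 := by
  rw [← h, γ_smul_e₂_smul]

end Vertices

variable [Module K M] [IsScalarTower K (Op K) M]

namespace Rep

/-- The map out of `P₁ ⊗ V` determined by the images of the generators `e₁ ⊗ v`. -/
def liftP₁ (φ : V →ₗ[K] M) (h : ∀ v, e₁ K • φ v = φ v) : Rep P₁ V →ₗ[Op K] M :=
  ofLinearMap (K := K)
    { toFun := fun x => φ (x 0) + α K • φ (x 1) + α K • α K • φ (x 2) + α K • α K • α K • φ (x 3)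
        + α K • α K • α K • α K • φ (x 4) + γ K • φ (x 5) + γ K • α K • φ (x 6)
        + γ K • α K • α K • φ (x 7)
      map_add' := fun x y => by simp only [add_apply, map_add, smul_add]; abel
      map_smul' := fun c x => by simp [smul_add, smul_comm c] }
    (fun x => by simp [h]) (fun x => by simp) (fun x => by simp)
    (fun x => by simp [β_smul_of_e₁_smul_eq (h _)])

/-- The map out of `P₂ ⊗ V` determined by the images of the generators `e₂ ⊗ v`. -/
def liftP₂ (φ : V →ₗ[K] M) (h : ∀ v, e₂ K • φ v = φ v) : Rep P₂ V →ₗ[Op K] M :=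
  ofLinearMap (K := K)
    { toFun := fun x => φ (x 0) + γ K • β K • φ (x 1) + γ K • α K • α K • β K • φ (x 2)
        + β K • φ (x 3) + α K • β K • φ (x 4) + α K • α K • β K • φ (x 5)
      map_add' := fun x y => by simp only [add_apply, map_add, smul_add]; abel
      map_smul' := fun c x => by simp [smul_add, smul_comm c] }
    (fun x => by simp [e₁_smul_of_e₂_smul_eq (h _)])
    (fun x => by simp [α_smul_of_e₂_smul_eq (h _)])
    (fun x => by simp [γ_smul_of_e₂_smul_eq (h _)]) (fun x => by simp)

/-- The map out of `X ⊗ V` determined by the images of the generators `e₁ ⊗ v`. -/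
def liftX (φ : V →ₗ[K] M) (h : ∀ v, e₁ K • φ v = φ v) (hγ : ∀ v, γ K • φ v = 0) :
    Rep X V →ₗ[Op K] M :=
  have hα (v : V) : α K • α K • φ v = 0 := by rw [← β_smul_γ_smul, hγ, smul_zero]
  ofLinearMap (K := K)
    { toFun := fun x => φ (x 0) + α K • φ (x 1) + γ K • α K • φ (x 2)
      map_add' := fun x y => by simp only [add_apply, map_add, smul_add]; abel
      map_smul' := fun c x => by simp [smul_add, smul_comm c] }
    (fun x => by simp [h]) (fun x => by simp [hα]) (fun x => by simp [hγ])
    (fun x => by simp [β_smul_of_e₁_smul_eq (h _), hα])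

/-- The map out of `Y ⊗ V` determined by the images of the generators `e₁ ⊗ v`. -/
def liftY (φ : V →ₗ[K] M) (h : ∀ v, e₁ K • φ v = φ v) (hγ : ∀ v, γ K • φ v = 0)
    (hγα : ∀ v, γ K • α K • φ v = 0) : Rep Y V →ₗ[Op K] M :=
  have hα (v : V) : α K • α K • φ v = 0 := by rw [← β_smul_γ_smul, hγ, smul_zero]
  ofLinearMap (K := K)
    { toFun := fun x => φ (x 0) + α K • φ (x 1)
      map_add' := fun x y => by simp only [add_apply, map_add, smul_add]; abel
      map_smul' := fun c x => by simp [smul_add, smul_comm c] }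
    (fun x => by simp [h]) (fun x => by simp [hα]) (fun x => by simp [hγ, hγα])
    (fun x => by simp [β_smul_of_e₁_smul_eq (h _)])

/-- The map out of `Z ⊗ V` determined by the images of the generators `φ ⊗ v` and `ψ ⊗ v`. -/
def liftZ (φ ψ : V →ₗ[K] M) (hφ : ∀ v, e₂ K • φ v = φ v) (hψ : ∀ v, e₂ K • ψ v = ψ v)
    (hβ : ∀ v, β K • φ v = α K • β K • ψ v) : Rep Z V →ₗ[Op K] M :=
  have hγ (v : V) : γ K • α K • α K • β K • ψ v = 0 := by rw [← hβ, γ_smul_α_smul_β_smul]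
  ofLinearMap (K := K)
    { toFun := fun x => φ (x 0) + ψ (x 1) + γ K • β K • ψ (x 2)
        + β K • ψ (x 3) + α K • β K • ψ (x 4) + α K • α K • β K • ψ (x 5)
      map_add' := fun x y => by simp only [add_apply, map_add, smul_add]; abel
      map_smul' := fun c x => by simp [smul_add, smul_comm c] }
    (fun x => by simp [e₁_smul_of_e₂_smul_eq (hφ _), e₁_smul_of_e₂_smul_eq (hψ _)])
    (fun x => by simp [α_smul_of_e₂_smul_eq (hφ _), α_smul_of_e₂_smul_eq (hψ _)])
    (fun x => by simp [γ_smul_of_e₂_smul_eq (hφ _), γ_smul_of_e₂_smul_eq (hψ _), hγ])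
    (fun x => by simp [hβ, add_comm])

/-- The map out of `U ⊗ V` determined by the images of the generators `e₂ ⊗ v`. -/
def liftU (φ : V →ₗ[K] M) (h : ∀ v, e₂ K • φ v = φ v) (hβ : ∀ v, β K • φ v = 0) :
    Rep U V →ₗ[Op K] M :=
  ofLinearMap (K := K)
    { toFun := fun x => φ (x 0)
      map_add' := fun x y => by simp
      map_smul' := fun c x => by simp }
    (fun x => by simp [e₁_smul_of_e₂_smul_eq (h _)])
    (fun x => by simp [α_smul_of_e₂_smul_eq (h _)])
    (fun x => by simp [γ_smul_of_e₂_smul_eq (h _)]) (fun x => by simp [hβ])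

@[simp]
theorem liftP₁_single (φ : V →ₗ[K] M) (h) (v : V) : liftP₁ φ h (single P₁ K V 0 v) = φ v := by
  simp [liftP₁]

@[simp]
theorem liftP₂_single (φ : V →ₗ[K] M) (h) (v : V) : liftP₂ φ h (single P₂ K V 0 v) = φ v := by
  simp [liftP₂]

@[simp]
theorem liftX_single (φ : V →ₗ[K] M) (h hγ) (v : V) :
    liftX φ h hγ (single X K V 0 v) = φ v := by
  simp [liftX]

@[simp]
theorem liftY_single (φ : V →ₗ[K] M) (h hγ hγα) (v : V) :
    liftY φ h hγ hγα (single Y K V 0 v) = φ v := by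
  simp [liftY]

@[simp]
theorem liftZ_single_zero (φ ψ : V →ₗ[K] M) (hφ hψ hβ) (v : V) :
    liftZ φ ψ hφ hψ hβ (single Z K V 0 v) = φ v := by
  simp [liftZ]

@[simp]
theorem liftZ_single_one (φ ψ : V →ₗ[K] M) (hφ hψ hβ) (v : V) :
    liftZ φ ψ hφ hψ hβ (single Z K V 1 v) = ψ v := by
  simp [liftZ]

@[simp]
theorem liftU_single (φ : V →ₗ[K] M) (h hβ) (v : V) :
    liftU φ h hβ (single U K V 0 v) = φ v := by
  simp [liftU]

@[simp]
theorem e₁_smul_single_P₁ (v : V) : e₁ K • single P₁ K V 0 v = single P₁ K V 0 v := by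
  ext i; fin_cases i <;> simp

@[simp]
theorem e₂_smul_single_P₂ (v : V) : e₂ K • single P₂ K V 0 v = single P₂ K V 0 v := by
  ext i; fin_cases i <;> simp

theorem liftP₁_single_eq_self (x : Rep P₁ V) :
    liftP₁ (single P₁ K V 0) e₁_smul_single_P₁ x = x := by
  ext i; fin_cases i <;> simp [liftP₁]

theorem liftP₂_single_eq_self (x : Rep P₂ V) :
    liftP₂ (single P₂ K V 0) e₂_smul_single_P₂ x = x := by
  ext i; fin_cases i <;> simp [liftP₂]

theorem hom_ext_P₁ {L : Type} [AddCommGroup L] [Module (Op K) L]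
    {f g : Rep P₁ V →ₗ[Op K] L}
    (h : ∀ v, f (single P₁ K V 0 v) = g (single P₁ K V 0 v)) : f = g := by
  ext x
  rw [← liftP₁_single_eq_self (K := K) x]
  simp [liftP₁, h]

theorem hom_ext_P₂ {L : Type} [AddCommGroup L] [Module (Op K) L]
    {f g : Rep P₂ V →ₗ[Op K] L}
    (h : ∀ v, f (single P₂ K V 0 v) = g (single P₂ K V 0 v)) : f = g := by
  ext x
  rw [← liftP₂_single_eq_self (K := K) x]
  simp [liftP₂, h]

instance : Module.Projective (Op K) (Rep P₁ V) :=
  Module.Projective.of_lifting_property'' (R := Op K) fun f hf => by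
    obtain ⟨s, hs⟩ := LinearMap.exists_rightInverse_of_surjective (f.restrictScalars K)
      (LinearMap.range_eq_top.2 hf)
    have hfs (x : Rep P₁ V) : f (s x) = x := LinearMap.congr_fun hs x
    let φ := Algebra.lsmul K K _ (e₁ K) ∘ₗ s ∘ₗ single P₁ K V 0
    have hφ (v : V) : e₁ K • φ v = φ v := by simp [φ]
    exact ⟨liftP₁ φ hφ, hom_ext_P₁ fun v => by simp [φ, hfs]⟩

instance : Module.Projective (Op K) (Rep P₂ V) :=
  Module.Projective.of_lifting_property'' (R := Op K) fun f hf => by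
    obtain ⟨s, hs⟩ := LinearMap.exists_rightInverse_of_surjective (f.restrictScalars K)
      (LinearMap.range_eq_top.2 hf)
    have hfs (x : Rep P₂ V) : f (s x) = x := LinearMap.congr_fun hs x
    let φ := Algebra.lsmul K K _ (e₂ K) ∘ₗ s ∘ₗ single P₂ K V 0
    have hφ (v : V) : e₂ K • φ v = φ v := by simp [φ]
    exact ⟨liftP₂ φ hφ, hom_ext_P₂ fun v => by simp [φ, hfs]⟩

end Rep

open A5.Rep

instance : Module.Finite K (Op K) := by
  let φ₁ := Algebra.lsmul K K (Op K) (e₁ K) ∘ₗ Algebra.linearMap K (Op K)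
  let φ₂ := Algebra.lsmul K K (Op K) (e₂ K) ∘ₗ Algebra.linearMap K (Op K)
  have hφ₁ (v : K) : e₁ K • φ₁ v = φ₁ v := by simp [φ₁, -smul_eq_mul]
  have hφ₂ (v : K) : e₂ K • φ₂ v = φ₂ v := by simp [φ₂, -smul_eq_mul]
  let f : Rep P₁ K × Rep P₂ K →ₗ[Op K] Op K := (liftP₁ φ₁ hφ₁).coprod (liftP₂ φ₂ hφ₂)
  have hf : f (single P₁ K K 0 1, single P₂ K K 0 1) = 1 := by
    simp [f, φ₁, φ₂, (relations K).e₁_add_e₂]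
  refine Module.Finite.of_surjective (f.restrictScalars K) fun r =>
    ⟨r • (single P₁ K K 0 1, single P₂ K K 0 1), ?_⟩
  rw [LinearMap.restrictScalars_apply, map_smul, hf, smul_eq_mul, mul_one]

variable (K M) in
theorem finite_of_finite_op [Module.Finite (Op K) M] : Module.Finite K M :=
  Module.Finite.trans (Op K) M

end Lift

end A5

namespace A5

open Shape A5.Rep

section Cover

variable {K : Type} [Field K] {V : Type} [AddCommGroup V] [Module K V]

theorem mem_rad_prod {M N : Type} [AddCommGroup M] [Module (Op K) M] [AddCommGroup N]
    [Module (Op K) N] {x : M × N} : x ∈ rad K (M × N) ↔ x.1 ∈ rad K M ∧ x.2 ∈ rad K N := by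
  refine ⟨fun h => ⟨map_mem_rad (LinearMap.fst _ M N) h, map_mem_rad (LinearMap.snd _ M N) h⟩,
    fun h => ?_⟩
  simpa using add_mem (map_mem_rad (LinearMap.inl _ M N) h.1)
    (map_mem_rad (LinearMap.inr _ M N) h.2)

namespace Rep

theorem mem_rad_P₁ {x : Rep P₁ V} : x ∈ rad K (Rep P₁ V) ↔ x 0 = 0 := by
  constructor
  · rintro ⟨a, b, c, rfl⟩
    simp
  · intro h
    refine ⟨⟨![x 1, x 2, x 3, x 4, 0, 0, 0, 0]⟩, ⟨![x 5, x 6, x 7, 0, 0, 0, 0, 0]⟩, 0, ?_⟩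
    ext i; fin_cases i <;> simp [h]

theorem mem_rad_P₂ {x : Rep P₂ V} : x ∈ rad K (Rep P₂ V) ↔ x 0 = 0 := by
  constructor
  · rintro ⟨a, b, c, rfl⟩
    simp
  · intro h
    refine ⟨⟨![0, 0, 0, x 4, x 5, 0]⟩, ⟨![0, 0, 0, x 1, 0, x 2]⟩, ⟨![x 3, 0, 0, 0, 0, 0]⟩, ?_⟩
    ext i; fin_cases i <;> simp [h]

end Rep

variable {M : Type} [AddCommGroup M] [Module (Op K) M] [Module K M] [IsScalarTower K (Op K) M]
  [Module.Finite K M]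

variable (K M) in
theorem exists_basis_mod_rad {e : Op K} (he : e * e = e) :
    ∃ (a : ℕ) (φ : (Fin a → K) →ₗ[K] M), (∀ v, e • φ v = φ v) ∧ (∀ v, φ v ∈ rad K M → v = 0) ∧
      ∀ m : M, ∃ v, e • m - φ v ∈ rad K M := by
  let E := (Algebra.lsmul K K M e).range
  obtain ⟨C, hC⟩ := Submodule.exists_isCompl ((rad K M).restrictScalars K ⊓ E)
  have hE : (rad K M).restrictScalars K ⊓ E ⊔ C ⊓ E = E := by
    rw [← sup_inf_assoc_of_le _ inf_le_right, hC.sup_eq_top, top_inf_eq]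
  let b := (Module.finBasis K ↥(C ⊓ E)).equivFun
  refine ⟨_, (C ⊓ E).subtype ∘ₗ b.symm.toLinearMap, fun v => ?_, fun v hv => ?_, fun m => ?_⟩
  · obtain ⟨m, hm⟩ := (b.symm v).2.2
    simp [← hm, smul_smul, he]
  · have h := hC.disjoint.le_bot ⟨⟨hv, (b.symm v).2.2⟩, (b.symm v).2.1⟩
    simpa using h
  · have hm : e • m ∈ E := ⟨m, rfl⟩
    obtain ⟨r, hr, v, hv, h⟩ := Submodule.mem_sup.1 (hE ▸ hm)
    refine ⟨b ⟨v, hv⟩, ?_⟩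
    simpa [← h] using hr.1

variable (K M) in
theorem exists_projective_cover :
    ∃ (a₁ a₂ : ℕ) (π : Rep P₁ (Fin a₁ → K) × Rep P₂ (Fin a₂ → K) →ₗ[Op K] M),
      Function.Surjective π ∧ π.ker ≤ rad K _ := by
  obtain ⟨a₁, φ₁, he₁, hr₁, hs₁⟩ := exists_basis_mod_rad K M (relations K).e₁_mul_e₁
  obtain ⟨a₂, φ₂, he₂, hr₂, hs₂⟩ := exists_basis_mod_rad K M (relations K).e₂_mul_e₂
  let π : Rep P₁ (Fin a₁ → K) × Rep P₂ (Fin a₂ → K) →ₗ[Op K] M :=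
    (liftP₁ φ₁ he₁).coprod (liftP₂ φ₂ he₂)
  have hπ (v₁ v₂) : π (single P₁ K _ 0 v₁, single P₂ K _ 0 v₂) = φ₁ v₁ + φ₂ v₂ := by
    simp [π]
  refine ⟨a₁, a₂, π, surjective_of_range_sup_rad_eq_top π fun m => ?_, fun x hx => ?_⟩
  · obtain ⟨v₁, h₁⟩ := hs₁ m
    obtain ⟨v₂, h₂⟩ := hs₂ m
    refine ⟨(single P₁ K _ 0 v₁, single P₂ K _ 0 v₂), ?_⟩
    rw [hπ, ← e₁_smul_add_e₂_smul (K := K) m, add_sub_add_comm]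
    exact add_mem h₁ h₂
  · have hx' : x - (single P₁ K _ 0 (x.1 0), single P₂ K _ 0 (x.2 0)) ∈ rad K _ :=
      mem_rad_prod.2 ⟨mem_rad_P₁.2 (by simp), mem_rad_P₂.2 (by simp)⟩
    have hv : φ₁ (x.1 0) + φ₂ (x.2 0) ∈ rad K M := by
      have h := map_mem_rad π hx'
      rwa [map_sub, hπ, LinearMap.mem_ker.1 hx, zero_sub, neg_mem_iff] at h
    have hv₁ : φ₁ (x.1 0) ∈ rad K M := by
      simpa [he₁, e₁_smul_of_e₂_smul_eq (he₂ _)] using Submodule.smul_mem _ (e₁ K) hv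
    have hv₂ : φ₂ (x.2 0) ∈ rad K M := (add_mem_cancel_left hv₁).1 hv
    exact mem_rad_prod.2 ⟨mem_rad_P₁.2 (hr₁ _ hv₁), mem_rad_P₂.2 (hr₂ _ hv₂)⟩

variable (K M) in
theorem exists_equiv_of_projective [Module.Projective (Op K) M] :
    ∃ a₁ a₂ : ℕ, Nonempty (M ≃ₗ[Op K] Rep P₁ (Fin a₁ → K) × Rep P₂ (Fin a₂ → K)) := by
  obtain ⟨a₁, a₂, π, hπ, hker⟩ := exists_projective_cover K M
  obtain ⟨s, hs⟩ := Module.projective_lifting_property π LinearMap.id hπ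
  have hπs (m : M) : π (s m) = m := LinearMap.congr_fun hs m
  refine ⟨a₁, a₂, ⟨LinearEquiv.ofBijective s ⟨Function.LeftInverse.injective hπs, ?_⟩⟩⟩
  exact surjective_of_range_sup_rad_eq_top s fun x =>
    ⟨π x, hker (by rw [LinearMap.mem_ker, map_sub, hπs, sub_self])⟩

theorem exists_minimal_presentation (h : IsTauRigid (Op K) M) :
    ∃ (a₁ a₂ b₁ b₂ : ℕ)
      (f : Rep P₁ (Fin b₁ → K) × Rep P₂ (Fin b₂ → K) →ₗ[Op K]
        Rep P₁ (Fin a₁ → K) × Rep P₂ (Fin a₂ → K))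
      (g : Rep P₁ (Fin a₁ → K) × Rep P₂ (Fin a₂ → K) →ₗ[Op K] M),
      Function.Surjective g ∧ Function.Exact f g ∧ g.ker ≤ rad K _ ∧ ExtendsAlong M f := by
  obtain ⟨Q₁, Q₀, f, g, _, _, _, _, hg, hfg, hf⟩ := h
  obtain ⟨a₁, a₂, g', hg', hker_g'⟩ := exists_projective_cover K M
  have : Module.Finite K g'.ker :=
    Module.Finite.of_injective (g'.ker.subtype.restrictScalars K) Subtype.val_injective
  obtain ⟨b₁, b₂, π, hπ, hker_π⟩ := exists_projective_cover K g'.ker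
  have hexact : Function.Exact (g'.ker.subtype ∘ₗ π) g' := fun x =>
    ⟨fun hx => (hπ ⟨x, hx⟩).imp fun y hy => by simp [hy], by rintro ⟨y, rfl⟩; exact (π y).2⟩
  have : IsNoetherian (Op K) (Rep P₁ (Fin b₁ → K) × Rep P₂ (Fin b₂ → K)) :=
    isNoetherian_of_tower K inferInstance
  refine ⟨a₁, a₂, b₁, b₂, g'.ker.subtype ∘ₗ π, g', hg', hexact, hker_g',
    ExtendsAlong.of_minimal hg hfg hf hg' hexact (isSuperfluous_of_le_rad hker_g') ?_⟩
  rw [LinearMap.ker_comp_of_ker_eq_bot _ (Submodule.ker_subtype _)]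
  exact isSuperfluous_of_le_rad hker_π

end Cover

end A5

namespace A5

open Shape A5.Rep

section Presentation

variable {K : Type} [Field K]
  {M : Type} [AddCommGroup M] [Module (Op K) M]
  {Q₁ : Type} [AddCommGroup Q₁] [Module (Op K) Q₁]
  {Q₀ : Type} [AddCommGroup Q₀] [Module (Op K) Q₀]
  {f : Q₁ →ₗ[Op K] Q₀} {g : Q₀ →ₗ[Op K] M}

/-- The properties of a projective presentation `f : Q₁ → Q₀`, `g : Q₀ → M` exhibiting the
τ-rigidity of `M`, with `Q₀` a projective cover of `M`. -/
structure IsRigidPresentation (f : Q₁ →ₗ[Op K] Q₀) (g : Q₀ →ₗ[Op K] M) : Prop where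
  surjective : Function.Surjective g
  exact : Function.Exact f g
  ker_le_rad : g.ker ≤ rad K Q₀
  extendsAlong : ExtendsAlong M f

namespace IsRigidPresentation

theorem congr {Q₁' Q₀' : Type} [AddCommGroup Q₁'] [Module (Op K) Q₁'] [AddCommGroup Q₀']
    [Module (Op K) Q₀'] (h : IsRigidPresentation f g) (i₁ : Q₁' ≃ₗ[Op K] Q₁)
    (i₀ : Q₀ ≃ₗ[Op K] Q₀') :
    IsRigidPresentation (i₀.toLinearMap ∘ₗ f ∘ₗ i₁.toLinearMap) (g ∘ₗ i₀.symm.toLinearMap) where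
  surjective := h.surjective.comp i₀.symm.surjective
  exact x := by
    refine (h.exact (i₀.symm x)).trans ⟨?_, ?_⟩
    · rintro ⟨y, hy⟩
      exact ⟨i₁.symm y, by simp [hy]⟩
    · rintro ⟨y, rfl⟩
      exact ⟨i₁ y, by simp⟩
  ker_le_rad x hx := by
    simpa using map_mem_rad i₀.toLinearMap (h.ker_le_rad hx)
  extendsAlong u := by
    obtain ⟨k, hk⟩ := h.extendsAlong (u ∘ₗ i₁.symm.toLinearMap)
    refine ⟨k ∘ₗ i₀.symm.toLinearMap, LinearMap.ext fun x => ?_⟩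
    simpa using LinearMap.congr_fun hk (i₁ x)

theorem map_mem_rad_iff (h : IsRigidPresentation f g) {x : Q₀} :
    g x ∈ rad K M ↔ x ∈ rad K Q₀ := by
  refine ⟨fun hx => ?_, map_mem_rad g⟩
  obtain ⟨y, hy, hyx⟩ := exists_mem_rad_map_eq h.surjective hx
  rw [← sub_add_cancel x y]
  exact add_mem (h.ker_le_rad (by rw [LinearMap.mem_ker, map_sub, hyx, sub_self])) hy

theorem mem_rad (h : IsRigidPresentation f g) (x : Q₁) : f x ∈ rad K Q₀ :=
  h.ker_le_rad (h.exact.apply_apply_eq_zero x)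

end IsRigidPresentation

section Vector

variable [Module K M] [IsScalarTower K (Op K) M] {W : Type} [AddCommGroup W] [Module K W]

theorem exists_hom_single_eq_P₁ {f : Rep P₁ W →ₗ[Op K] Q₀} (hf : ExtendsAlong M f) {w : W}
    (hw : w ≠ 0) {m : M} (hm : e₁ K • m = m) :
    ∃ k : Q₀ →ₗ[Op K] M, k (f (single P₁ K W 0 w)) = m := by
  obtain ⟨ξ, hξ⟩ := Module.Projective.exists_dual_eq_one K hw
  have hφ (v) : e₁ K • ξ.smulRight m v = ξ.smulRight m v := by
    rw [LinearMap.smulRight_apply, smul_comm, hm]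
  obtain ⟨k, hk⟩ := hf (liftP₁ (ξ.smulRight m) hφ)
  refine ⟨k, (LinearMap.congr_fun hk _).trans ((liftP₁_single _ _ w).trans ?_)⟩
  rw [LinearMap.smulRight_apply, hξ, one_smul]

theorem exists_hom_single_eq_P₂ {f : Rep P₂ W →ₗ[Op K] Q₀} (hf : ExtendsAlong M f) {w : W}
    (hw : w ≠ 0) {m : M} (hm : e₂ K • m = m) :
    ∃ k : Q₀ →ₗ[Op K] M, k (f (single P₂ K W 0 w)) = m := by
  obtain ⟨ξ, hξ⟩ := Module.Projective.exists_dual_eq_one K hw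
  have hφ (v) : e₂ K • ξ.smulRight m v = ξ.smulRight m v := by
    rw [LinearMap.smulRight_apply, smul_comm, hm]
  obtain ⟨k, hk⟩ := hf (liftP₂ (ξ.smulRight m) hφ)
  refine ⟨k, (LinearMap.congr_fun hk _).trans ((liftP₂_single _ _ w).trans ?_)⟩
  rw [LinearMap.smulRight_apply, hξ, one_smul]

end Vector

section Support

variable [Module K M] [IsScalarTower K (Op K) M]
  {V₁ V₂ W₁ W₂ : Type} [AddCommGroup V₁] [Module K V₁] [AddCommGroup V₂] [Module K V₂]
  [AddCommGroup W₁] [Module K W₁] [AddCommGroup W₂] [Module K W₂]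
  {f : Rep P₁ W₁ × Rep P₂ W₂ →ₗ[Op K] Rep P₁ V₁ × Rep P₂ V₂}
  {g : Rep P₁ V₁ × Rep P₂ V₂ →ₗ[Op K] M}

theorem IsRigidPresentation.subsingleton_or_subsingleton_P₁ (h : IsRigidPresentation f g) :
    Subsingleton W₁ ∨ Subsingleton V₁ := by
  rcases subsingleton_or_nontrivial W₁ with hW | hW
  · exact .inl hW
  refine .inr (subsingleton_of_forall_eq 0 fun v => ?_)
  obtain ⟨w, hw⟩ := exists_ne (0 : W₁)
  have hf : ExtendsAlong M (f ∘ₗ LinearMap.inl (Op K) _ (Rep P₂ W₂)) := fun u => by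
    obtain ⟨k, hk⟩ := h.extendsAlong (u.coprod 0)
    exact ⟨k, by rw [← LinearMap.comp_assoc, hk, LinearMap.coprod_inl]⟩
  have hm : e₁ K • g (single P₁ K V₁ 0 v, 0) = g (single P₁ K V₁ 0 v, 0) := by
    rw [← map_smul, Prod.smul_mk, smul_zero, e₁_smul_single_P₁]
  obtain ⟨k, hk⟩ := exists_hom_single_eq_P₁ hf hw hm
  have hv := h.map_mem_rad_iff.1 (hk ▸ map_mem_rad k (h.mem_rad _))
  simpa using mem_rad_P₁.1 (mem_rad_prod.1 hv).1

theorem IsRigidPresentation.subsingleton_or_subsingleton_P₂ (h : IsRigidPresentation f g) :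
    Subsingleton W₂ ∨ Subsingleton V₂ := by
  rcases subsingleton_or_nontrivial W₂ with hW | hW
  · exact .inl hW
  refine .inr (subsingleton_of_forall_eq 0 fun v => ?_)
  obtain ⟨w, hw⟩ := exists_ne (0 : W₂)
  have hf : ExtendsAlong M (f ∘ₗ LinearMap.inr (Op K) (Rep P₁ W₁) _) := fun u => by
    obtain ⟨k, hk⟩ := h.extendsAlong (LinearMap.coprod 0 u)
    exact ⟨k, by rw [← LinearMap.comp_assoc, hk, LinearMap.coprod_inr]⟩
  have hm : e₂ K • g (0, single P₂ K V₂ 0 v) = g (0, single P₂ K V₂ 0 v) := by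
    rw [← map_smul, Prod.smul_mk, smul_zero, e₂_smul_single_P₂]
  obtain ⟨k, hk⟩ := exists_hom_single_eq_P₂ hf hw hm
  have hv := h.map_mem_rad_iff.1 (hk ▸ map_mem_rad k (h.mem_rad _))
  simpa using mem_rad_P₂.1 (mem_rad_prod.1 hv).2

end Support

section Dimension

variable [Module K M] [IsScalarTower K (Op K) M] [Module.Finite K M]
  {T : Type} [AddCommGroup T] [Module (Op K) T] [Module K T] [IsScalarTower K (Op K) T]
  [Module.Finite K T]

theorem nonempty_equiv_of_surjective {s : T →ₗ[Op K] M} (hs : Function.Surjective s)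
    (h : Module.finrank K T ≤ Module.finrank K M) : Nonempty (M ≃ₗ[Op K] T) := by
  have hdim := h.antisymm (LinearMap.finrank_le_finrank_of_surjective (f := s.restrictScalars K) hs)
  have hi : Function.Injective (s.restrictScalars K) :=
    (LinearMap.injective_iff_surjective_of_finrank_eq_finrank hdim).2 hs
  exact ⟨(LinearEquiv.ofBijective s ⟨hi, hs⟩).symm⟩

variable [Module K Q₀] [IsScalarTower K (Op K) Q₀] [Module.Finite K Q₀]

theorem nonempty_equiv_of_surjective_of_quotient (hg : Function.Surjective g)
    (hfg : Function.Exact f g) {s : T →ₗ[Op K] M} (hs : Function.Surjective s)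
    {D : Type} [AddCommGroup D] [Module K D] {q : Q₀ →ₗ[K] D} (hq : Function.Surjective q)
    (hqf : ∀ x, q (f x) = 0) (h : Module.finrank K T ≤ Module.finrank K D) :
    Nonempty (M ≃ₗ[Op K] T) := by
  refine nonempty_equiv_of_surjective hs (h.trans ?_)
  have hker : (g.restrictScalars K).ker ≤ q.ker := fun x hx => by
    obtain ⟨y, rfl⟩ := (hfg x).1 hx
    exact hqf y
  have hgK : Function.Surjective (g.restrictScalars K) := hg
  have hg' := (g.restrictScalars K).finrank_range_add_finrank_ker
  have hq' := q.finrank_range_add_finrank_ker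
  rw [LinearMap.range_eq_top.2 hgK, finrank_top] at hg'
  rw [LinearMap.range_eq_top.2 hq, finrank_top] at hq'
  have := Submodule.finrank_mono hker
  omega

theorem nonempty_equiv_of_surjective_of_kernel [Module K Q₁] [IsScalarTower K (Op K) Q₁]
    [Module.Finite K Q₁] (hg : Function.Surjective g) (hfg : Function.Exact f g)
    {s : T →ₗ[Op K] M} (hs : Function.Surjective s)
    {E : Type} [AddCommGroup E] [Module K E] {j : E →ₗ[K] Q₁} (hj : Function.Injective j)
    (hfj : ∀ x, f (j x) = 0)
    (h : Module.finrank K T + Module.finrank K Q₁ ≤ Module.finrank K Q₀ + Module.finrank K E) :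
    Nonempty (M ≃ₗ[Op K] T) := by
  refine nonempty_equiv_of_surjective hs ?_
  have hrange : (g.restrictScalars K).ker ≤ (f.restrictScalars K).range := fun x hx => (hfg x).1 hx
  have hker : j.range ≤ (f.restrictScalars K).ker := by
    rintro _ ⟨x, rfl⟩
    exact hfj x
  have hgK : Function.Surjective (g.restrictScalars K) := hg
  have hg' := (g.restrictScalars K).finrank_range_add_finrank_ker
  have hf' := (f.restrictScalars K).finrank_range_add_finrank_ker
  rw [LinearMap.range_eq_top.2 hgK, finrank_top] at hg'
  have := Submodule.finrank_mono hrange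
  have := Submodule.finrank_mono hker
  have := LinearMap.finrank_range_of_inj hj
  omega

end Dimension

end Presentation

end A5

namespace A5

open Shape A5.Rep

section Complement

variable {K V : Type} [Field K] [AddCommGroup V] [Module K V] [Module.Finite K V]

theorem exists_prod_equiv_mem_iff (N : Submodule K V) :
    ∃ (p q : ℕ) (e : ((Fin p → K) × (Fin q → K)) ≃ₗ[K] V), Module.finrank K N = p ∧
      p + q = Module.finrank K V ∧ ∀ x, e x ∈ N ↔ x.2 = 0 := by
  obtain ⟨C, hC⟩ := Submodule.exists_isCompl N
  let i := (Module.finBasis K N).equivFun.symm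
  let j := (Module.finBasis K C).equivFun.symm
  refine ⟨_, _, (i.prodCongr j).trans (N.prodEquivOfIsCompl C hC), rfl,
    Submodule.finrank_add_eq_of_isCompl hC, fun x => ?_⟩
  rw [LinearEquiv.trans_apply, Submodule.coe_prodEquivOfIsCompl',
    Submodule.add_mem_iff_right N (by simp), LinearEquiv.prodCongr_apply]
  refine ⟨fun h => ?_, fun h => by simp [h]⟩
  have h0 := hC.disjoint.le_bot ⟨h, (j x.2).2⟩
  simpa using h0

end Complement

namespace Rep

variable {n : ℕ} (S : Shape n) (K V : Type) [Field K] [AddCommGroup V] [Module K V]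

/-- The coordinates of an element of `Rep S V`, as linear maps. -/
def coordₗ (i : Fin n) : Rep S V →ₗ[K] V := LinearMap.proj i ∘ₗ (linearEquivFun S K V).toLinearMap

@[simp]
theorem coordₗ_apply (i : Fin n) (x : Rep S V) : coordₗ S K V i x = x i := rfl

end Rep

section NormalForm

variable {K : Type} [Field K] {V W : Type} [AddCommGroup V] [Module K V] [AddCommGroup W]
  [Module K W]

namespace Rep

/-- The map `f : P₂ ⊗ W → P₁ ⊗ V` is given by `γ ⊗ F₀ + γα ⊗ F₁ + γα² ⊗ F₂`. -/
def HasγCoeffs (f : Rep P₂ W →ₗ[Op K] Rep P₁ V) (F₀ F₁ F₂ : W →ₗ[K] V) : Prop :=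
  ∀ w, f (single P₂ K W 0 w) = ⟨![0, 0, 0, 0, 0, F₀ w, F₁ w, F₂ w]⟩

/-- The map `f : P₁ ⊗ W → P₂ ⊗ V` is given by `β ⊗ F₀ + αβ ⊗ F₁ + α²β ⊗ F₂`. -/
def HasβCoeffs (f : Rep P₁ W →ₗ[Op K] Rep P₂ V) (F₀ F₁ F₂ : W →ₗ[K] V) : Prop :=
  ∀ w, f (single P₁ K W 0 w) = ⟨![0, 0, 0, F₀ w, F₁ w, F₂ w]⟩

theorem HasγCoeffs.apply_eq {f : Rep P₂ W →ₗ[Op K] Rep P₁ V} {F₀ F₁ F₂ : W →ₗ[K] V}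
    (hf : HasγCoeffs f F₀ F₁ F₂) (z : Rep P₂ W) :
    f z = ⟨![0, 0, F₀ (z 3), F₁ (z 3) + F₀ (z 4), F₂ (z 3) + F₁ (z 4) + F₀ (z 5),
      F₀ (z 0), F₁ (z 0), F₂ (z 0) + F₀ (z 1)]⟩ := by
  nth_rw 1 [← liftP₂_single_eq_self (K := K) z]
  ext i; fin_cases i <;> simp [liftP₂, hf _]

theorem HasβCoeffs.apply_eq {f : Rep P₁ W →ₗ[Op K] Rep P₂ V} {F₀ F₁ F₂ : W →ₗ[K] V}
    (hf : HasβCoeffs f F₀ F₁ F₂) (z : Rep P₁ W) :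
    f z = ⟨![0, F₀ (z 5), F₂ (z 5) + F₁ (z 6) + F₀ (z 7),
      F₀ (z 0), F₁ (z 0) + F₀ (z 1), F₂ (z 0) + F₁ (z 1) + F₀ (z 2)]⟩ := by
  nth_rw 1 [← liftP₁_single_eq_self (K := K) z]
  ext i; fin_cases i <;> simp [liftP₁, hf _]

theorem exists_hasγCoeffs (f : Rep P₂ W →ₗ[Op K] Rep P₁ V) :
    ∃ F₀ F₁ F₂ : W →ₗ[K] V, HasγCoeffs f F₀ F₁ F₂ := by
  let F (i : Fin 8) : W →ₗ[K] V := coordₗ P₁ K V i ∘ₗ f.restrictScalars K ∘ₗ single P₂ K W 0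
  have hf (w : W) : e₂ K • f (single P₂ K W 0 w) = f (single P₂ K W 0 w) := by
    rw [← map_smul, e₂_smul_single_P₂]
  refine ⟨F 5, F 6, F 7, fun w => ?_⟩
  rw [← hf w]
  ext i; fin_cases i <;> simp [F]

theorem exists_hasβCoeffs (f : Rep P₁ W →ₗ[Op K] Rep P₂ V) :
    ∃ F₀ F₁ F₂ : W →ₗ[K] V, HasβCoeffs f F₀ F₁ F₂ := by
  let F (i : Fin 6) : W →ₗ[K] V := coordₗ P₂ K V i ∘ₗ f.restrictScalars K ∘ₗ single P₁ K W 0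
  have hf (w : W) : e₁ K • f (single P₁ K W 0 w) = f (single P₁ K W 0 w) := by
    rw [← map_smul, e₁_smul_single_P₁]
  refine ⟨F 3, F 4, F 5, fun w => ?_⟩
  rw [← hf w]
  ext i; fin_cases i <;> simp [F]

end Rep

end NormalForm

theorem isSumOf_of_equiv_rep {m n : ℕ} {S : Shape m} {S' : Shape n} {K V V' : Type} [Field K]
    [AddCommGroup V] [Module K V] [Module.Finite K V] [AddCommGroup V'] [Module K V']
    [Module.Finite K V'] {M : Type*} [AddCommGroup M] [Module (Op K) M]
    (e : M ≃ₗ[Op K] Rep S V × Rep S' V') : IsSumOf (Op K) (Rep S K) (Rep S' K) M :=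
  ⟨_, _, ⟨e.trans ((equivPi S K V).prodCongr (equivPi S' K V'))⟩⟩

end A5

namespace A5

open Shape A5.Rep

variable {K : Type} [Field K] {M : Type} [AddCommGroup M] [Module (Op K) M]
  {V W : Type} [AddCommGroup V] [Module K V] [AddCommGroup W] [Module K W]

section PresentationX

variable {f : Rep P₂ W →ₗ[Op K] Rep P₁ V} {g : Rep P₁ V →ₗ[Op K] M}
  {F₀ F₁ F₂ : W →ₗ[K] V}

theorem Rep.HasγCoeffs.γ_smul_α_smul_map_eq_zero (hf : HasγCoeffs f F₀ F₁ F₂)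
    (hfg : Function.Exact f g) (hF₀ : Function.Surjective F₀) {w w' : W} (hw : F₀ w = 0)
    (hw' : F₀ w' = F₁ w) : γ K • α K • g ⟨![F₀ w', F₁ w', F₂ w', 0, 0, 0, 0, 0]⟩ = 0 := by
  obtain ⟨y, hy⟩ := hF₀ (F₁ w' - F₂ w)
  have hz : f ⟨![w, y, 0, 0, 0, 0]⟩ = γ K • α K • ⟨![F₀ w', F₁ w', F₂ w', 0, 0, 0, 0, 0]⟩ := by
    rw [hf.apply_eq]; ext i; fin_cases i <;> simp [hw, hy, hw']
  rw [← map_smul, ← map_smul, ← hz, hfg.apply_apply_eq_zero]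

theorem Rep.HasγCoeffs.exists_surjective_apply_eq_zero (hf : HasγCoeffs f F₀ F₁ F₂)
    {σ : V →ₗ[K] W} (hσ : ∀ v, F₀ (σ v) = v) {D D' : Type} [AddCommGroup D] [Module K D]
    [AddCommGroup D'] [Module K D'] {e : (D × D') ≃ₗ[K] V}
    (he : ∀ x, e x ∈ F₀.ker.map F₁ ↔ x.2 = 0) :
    ∃ t : Rep P₁ V →ₗ[K] V × V × D', Function.Surjective t ∧ ∀ z, t (f z) = 0 := by
  let r : Rep P₁ V →ₗ[K] V := coordₗ P₁ K V 6 - F₁ ∘ₗ σ ∘ₗ coordₗ P₁ K V 5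
  refine ⟨(coordₗ P₁ K V 0).prod ((coordₗ P₁ K V 1).prod
    (LinearMap.snd K D D' ∘ₗ e.symm.toLinearMap ∘ₗ r)), fun y => ?_, fun z => ?_⟩
  · exact ⟨⟨![y.1, y.2.1, 0, 0, 0, 0, e (0, y.2.2), 0]⟩, by simp [r]⟩
  · have hz : F₁ (z 0 - σ (F₀ (z 0))) ∈ F₀.ker.map F₁ :=
      ⟨_, by rw [SetLike.mem_coe, LinearMap.mem_ker, map_sub, hσ, sub_self], rfl⟩
    rw [← e.apply_symm_apply (F₁ _), he, map_sub] at hz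
    simpa [r, hf.apply_eq] using hz

variable [Module K M] [IsScalarTower K (Op K) M]

theorem IsRigidPresentation.surjective_of_apply_eq_zero (h : IsRigidPresentation f g)
    (hf : HasγCoeffs f F₀ F₁ F₂) {w : W} (hw : w ≠ 0) (hw₀ : F₀ w = 0) :
    Function.Surjective F₀ := by
  intro v
  obtain ⟨k, hk⟩ := exists_hom_single_eq_P₂ h.extendsAlong hw
    (e₂_smul_γ_smul (K := K) (g (single P₁ K V 0 v)))
  let y : Rep P₁ V := ⟨![F₁ w, F₂ w, 0, 0, 0, 0, 0, 0]⟩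
  have hy : f (single P₂ K W 0 w) = γ K • α K • y := by
    rw [hf]; ext i; fin_cases i <;> simp [y, hw₀]
  obtain ⟨x, hx⟩ := h.surjective (k y)
  have hmem : g (γ K • single P₁ K V 0 v - γ K • α K • x) = 0 := by
    rw [map_sub, map_smul, map_smul, map_smul, hx, ← hk, hy, map_smul, map_smul, sub_self]
  obtain ⟨z, hz⟩ := (h.exact _).1 hmem
  refine ⟨z 0, ?_⟩
  simpa [hf.apply_eq] using congrArg (coordₗ P₁ K V 5) hz

theorem Rep.HasγCoeffs.exists_map_γ_smul_eq_zero (hf : HasγCoeffs f F₀ F₁ F₂)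
    (hfg : Function.Exact f g) :
    ∃ φ : W →ₗ[K] M, (∀ w, φ w = g ⟨![F₀ w, F₁ w, F₂ w, 0, 0, 0, 0, 0]⟩) ∧
      (∀ w, e₁ K • φ w = φ w) ∧ ∀ w, γ K • φ w = 0 := by
  let u : W →ₗ[K] Rep P₁ V :=
    single P₁ K V 0 ∘ₗ F₀ + single P₁ K V 1 ∘ₗ F₁ + single P₁ K V 2 ∘ₗ F₂
  have hu (w) : u w = ⟨![F₀ w, F₁ w, F₂ w, 0, 0, 0, 0, 0]⟩ := by
    ext i; fin_cases i <;> simp [u]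
  have hγ (w) : γ K • u w = f (single P₂ K W 0 w) := by
    rw [hf, hu]; ext i; fin_cases i <;> simp
  have he (w) : e₁ K • u w = u w := by
    rw [hu]; ext i; fin_cases i <;> simp
  refine ⟨g.restrictScalars K ∘ₗ u, fun w => congrArg g (hu w), fun w => ?_, fun w => ?_⟩
  · simp [← map_smul, he]
  · simp [← map_smul, hγ, hfg.apply_apply_eq_zero]

variable [Module.Finite K V] [Module.Finite K M]

theorem isSumOf_X_P₁ [Module.Finite K W] (hg : Function.Surjective g) (hfg : Function.Exact f g)
    (hf : HasγCoeffs f F₀ F₁ F₂)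
    (hF₀ : Function.Injective F₀) : IsSumOf (Op K) (Rep X K) (Rep P₁ K) M := by
  obtain ⟨p, q, e, hp, hpq, he⟩ := exists_prod_equiv_mem_iff F₀.range
  obtain ⟨φ, hφg, hφ, hφγ⟩ := hf.exists_map_γ_smul_eq_zero hfg
  let ψ : (Fin q → K) →ₗ[K] M :=
    g.restrictScalars K ∘ₗ single P₁ K V 0 ∘ₗ e.toLinearMap ∘ₗ LinearMap.inr K _ _
  have hψ (v) : e₁ K • ψ v = ψ v := by simp [ψ, ← map_smul]
  let s := (liftX φ hφ hφγ).coprod (liftP₁ ψ hψ)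
  have hs : Function.Surjective s := surjective_of_range_sup_rad_eq_top s fun m => by
    obtain ⟨x, rfl⟩ := hg m
    obtain ⟨w, hw⟩ := (he ((e.symm (x 0)).1, 0)).2 rfl
    refine ⟨(single X K W 0 w, single P₁ K _ 0 (e.symm (x 0)).2), ?_⟩
    have hx : x - (⟨![F₀ w, F₁ w, F₂ w, 0, 0, 0, 0, 0]⟩
        + single P₁ K V 0 (e (0, (e.symm (x 0)).2))) ∈ rad K _ := by
      rw [mem_rad_P₁]
      simp [hw, ← map_add]
    simpa [s, hφg, ψ] using map_mem_rad g hx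
  obtain ⟨E⟩ := nonempty_equiv_of_surjective_of_kernel hg hfg hs (j := single P₂ K W 2)
    (fun w w' h => by simpa using congrArg (coordₗ P₂ K W 2) h)
    (fun w => by rw [hf.apply_eq]; ext i; fin_cases i <;> simp) (by
      rw [LinearMap.finrank_range_of_inj hF₀] at hp
      simp only [Module.finrank_prod, finrank_eq, Module.finrank_fin_fun]
      omega)
  exact isSumOf_of_equiv_rep E

/-- The copies of `Y` correspond to `F₁ (ker F₀)`: modulo the image of `f`, the relation
`γα ⊗ F₁ w = 0` holds for `w ∈ ker F₀`. -/
theorem isSumOf_Y_X (hg : Function.Surjective g) (hfg : Function.Exact f g)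
    (hf : HasγCoeffs f F₀ F₁ F₂) (hF₀ : Function.Surjective F₀) :
    IsSumOf (Op K) (Rep Y K) (Rep X K) M := by
  obtain ⟨σ, hσ⟩ := LinearMap.exists_rightInverse_of_surjective F₀ (LinearMap.range_eq_top.2 hF₀)
  have hσ (v) : F₀ (σ v) = v := LinearMap.congr_fun hσ v
  obtain ⟨p, q, e, -, hpq, he⟩ := exists_prod_equiv_mem_iff (F₀.ker.map F₁)
  obtain ⟨φ, hφg, hφ, hφγ⟩ := hf.exists_map_γ_smul_eq_zero hfg
  let φY : (Fin p → K) →ₗ[K] M := φ ∘ₗ σ ∘ₗ e.toLinearMap ∘ₗ LinearMap.inl K _ _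
  let φX : (Fin q → K) →ₗ[K] M := φ ∘ₗ σ ∘ₗ e.toLinearMap ∘ₗ LinearMap.inr K _ _
  have hφY (v) : e₁ K • φY v = φY v := hφ _
  have hφYγ (v) : γ K • φY v = 0 := hφγ _
  have hφYγα (v) : γ K • α K • φY v = 0 := by
    obtain ⟨w, hw, hwv⟩ := (he (v, 0)).2 rfl
    simpa [φY, hφg] using hf.γ_smul_α_smul_map_eq_zero hfg hF₀ hw ((hσ _).trans hwv.symm)
  have hφX (v) : e₁ K • φX v = φX v := hφ _
  have hφXγ (v) : γ K • φX v = 0 := hφγ _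
  let s := (liftY φY hφY hφYγ hφYγα).coprod (liftX φX hφX hφXγ)
  have hs : Function.Surjective s := surjective_of_range_sup_rad_eq_top s fun m => by
    obtain ⟨x, rfl⟩ := hg m
    refine ⟨(single Y K _ 0 (e.symm (x 0)).1, single X K _ 0 (e.symm (x 0)).2), ?_⟩
    have hx : x - ⟨![x 0, F₁ (σ (x 0)), F₂ (σ (x 0)), 0, 0, 0, 0, 0]⟩ ∈ rad K _ := by
      rw [mem_rad_P₁]
      simp
    have hsum : φY (e.symm (x 0)).1 + φX (e.symm (x 0)).2 = φ (σ (x 0)) := by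
      simp [φY, φX, ← map_add]
    simpa [s, hsum, hφg, hσ] using map_mem_rad g hx
  obtain ⟨t, ht, htf⟩ := hf.exists_surjective_apply_eq_zero hσ he
  obtain ⟨E⟩ := nonempty_equiv_of_surjective_of_quotient hg hfg hs ht htf (by
    simp only [Module.finrank_prod, finrank_eq, Module.finrank_fin_fun]
    omega)
  exact isSumOf_of_equiv_rep E

theorem IsRigidPresentation.isSumOf_X_P₁_or_isSumOf_Y_X [Module.Finite K W]
    (h : IsRigidPresentation f g) :
    IsSumOf (Op K) (Rep X K) (Rep P₁ K) M ∨ IsSumOf (Op K) (Rep Y K) (Rep X K) M := by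
  obtain ⟨F₀, F₁, F₂, hf⟩ := exists_hasγCoeffs f
  by_cases hF₀ : ∃ w ≠ 0, F₀ w = 0
  · obtain ⟨w, hw, hw₀⟩ := hF₀
    exact .inr (isSumOf_Y_X h.surjective h.exact hf (h.surjective_of_apply_eq_zero hf hw hw₀))
  · have hinj : Function.Injective F₀ := (injective_iff_map_eq_zero F₀).2 fun w =>
      not_imp_not.1 fun hw hw₀ => hF₀ ⟨w, hw, hw₀⟩
    exact .inl (isSumOf_X_P₁ h.surjective h.exact hf hinj)

end PresentationX

end A5

namespace A5

open Shape A5.Rep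

section PresentationZ

variable {K : Type} [Field K] {M : Type} [AddCommGroup M] [Module (Op K) M] [Module K M]
  [IsScalarTower K (Op K) M]
  {V W : Type} [AddCommGroup V] [Module K V] [AddCommGroup W] [Module K W]
  {f : Rep P₁ W →ₗ[Op K] Rep P₂ V} {g : Rep P₂ V →ₗ[Op K] M}
  {F₀ F₁ F₂ : W →ₗ[K] V}

theorem IsRigidPresentation.e₁_smul_eq_zero (h : IsRigidPresentation f g)
    (hf : HasβCoeffs f F₀ F₁ F₂) {w : W} (hw : w ≠ 0) (hw₀ : F₀ w = 0) (m : M) :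
    e₁ K • m = 0 := by
  refine e₁_smul_eq_zero_of_forall_exists (fun m => ?_) m
  obtain ⟨k, hk⟩ := exists_hom_single_eq_P₁ h.extendsAlong hw (e₁_smul_e₁_smul (K := K) m)
  let y : Rep P₂ V := ⟨![0, 0, 0, F₁ w, F₂ w, 0]⟩
  have hy : f (single P₁ K W 0 w) = α K • y := by
    rw [hf]; ext i; fin_cases i <;> simp [y, hw₀]
  exact ⟨k y, by rw [← hk, hy, map_smul]⟩

/-- Changing the generators `e₁ ⊗ w` of `P₁ ⊗ W` by multiples of `α` clears the component of `F₁`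
along `F₀`. -/
theorem Rep.HasβCoeffs.exists_equiv [Module.Finite K W] (hf : HasβCoeffs f F₀ F₁ F₂) {ρ : V →ₗ[K] W}
    (hρ : ∀ w, ρ (F₀ w) = w) :
    ∃ (θ : Rep P₁ W ≃ₗ[Op K] Rep P₁ W) (F₁' F₂' : W →ₗ[K] V),
      HasβCoeffs (f ∘ₗ θ.toLinearMap) F₀ F₁' F₂' ∧ ∀ w, ρ (F₁' w) = 0 := by
  let φ : W →ₗ[K] Rep P₁ W := single P₁ K W 0 - single P₁ K W 1 ∘ₗ ρ ∘ₗ F₁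
  have hφ (w) : e₁ K • φ w = φ w := by
    ext i; fin_cases i <;> simp [φ]
  have hθ : Function.Surjective (liftP₁ φ hφ) :=
    surjective_of_range_sup_rad_eq_top _ fun x =>
      ⟨single P₁ K W 0 (x 0), by rw [liftP₁_single, mem_rad_P₁]; simp [φ]⟩
  have hθ' : Function.Injective ((liftP₁ φ hφ).restrictScalars K) :=
    LinearMap.injective_iff_surjective.2 hθ
  refine ⟨.ofBijective (liftP₁ φ hφ) ⟨hθ', hθ⟩, F₁ - F₀ ∘ₗ ρ ∘ₗ F₁, F₂ - F₁ ∘ₗ ρ ∘ₗ F₁,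
    fun w => ?_, fun w => by simp [hρ]⟩
  have hw : f (φ w) = ⟨![0, 0, 0, F₀ w, F₁ w - F₀ (ρ (F₁ w)), F₂ w - F₁ (ρ (F₁ w))]⟩ := by
    rw [hf.apply_eq]; ext i; fin_cases i <;> simp [φ, sub_eq_add_neg]
  exact (congrArg f (liftP₁_single φ hφ w)).trans hw

theorem isSumOf_Z_U [Module.Finite K V] [Module.Finite K M] (hg : Function.Surjective g)
    (hfg : Function.Exact f g) (hf : HasβCoeffs f F₀ F₁ F₂) (hM : ∀ m : M, e₁ K • m = 0) :
    IsSumOf (Op K) (Rep Z K) (Rep U K) M := by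
  let φ : V →ₗ[K] M := g.restrictScalars K ∘ₗ single P₂ K V 0
  have hφ (v) : e₂ K • φ v = φ v := e₂_smul_of_e₁_smul_eq_zero (hM _)
  have hφβ (v) : β K • φ v = 0 := by rw [← e₁_smul_β_smul, hM]
  have hs : Function.Surjective (liftU φ hφ hφβ) :=
    surjective_of_range_sup_rad_eq_top _ fun m => by
      obtain ⟨x, rfl⟩ := hg m
      refine ⟨single U K V 0 (x 0), ?_⟩
      have hx : x - single P₂ K V 0 (x 0) ∈ rad K _ := mem_rad_P₂.2 (by simp)
      simpa [φ] using map_mem_rad g hx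
  obtain ⟨E⟩ := nonempty_equiv_of_surjective_of_quotient hg hfg hs (q := coordₗ P₂ K V 0)
    (fun v => ⟨single P₂ K V 0 v, by simp⟩) (fun z => by simp [hf.apply_eq])
    (by simp [finrank_eq])
  exact isSumOf_of_equiv_rep (V := Fin 0 → K) (E.trans (LinearEquiv.uniqueProd).symm)

theorem Rep.HasβCoeffs.exists_β_smul_eq (hf : HasβCoeffs f F₀ F₁ F₂)
    (hfg : Function.Exact f g) :
    ∃ φ : W →ₗ[K] M, (∀ w, φ w = g ⟨![F₀ w, F₂ w, 0, 0, 0, 0]⟩) ∧ (∀ w, e₂ K • φ w = φ w) ∧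
      ∀ w, β K • φ w = -(α K • β K • g (single P₂ K V 0 (F₁ w))) := by
  let u : W →ₗ[K] Rep P₂ V := single P₂ K V 0 ∘ₗ F₀ + single P₂ K V 1 ∘ₗ F₂
  have hu (w) : u w = ⟨![F₀ w, F₂ w, 0, 0, 0, 0]⟩ := by
    ext i; fin_cases i <;> simp [u]
  have hβ (w) : β K • u w = f (single P₁ K W 0 w) - α K • β K • single P₂ K V 0 (F₁ w) := by
    rw [hf, hu]; ext i; fin_cases i <;> simp
  have he (w) : e₂ K • u w = u w := by
    rw [hu]; ext i; fin_cases i <;> simp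
  refine ⟨g.restrictScalars K ∘ₗ u, fun w => congrArg g (hu w), fun w => ?_, fun w => ?_⟩
  · simp [← map_smul, he]
  · simp only [LinearMap.comp_apply, LinearMap.restrictScalars_apply]
    rw [← map_smul, hβ, map_sub, hfg.apply_apply_eq_zero, zero_sub, map_smul, map_smul]

theorem finrank_add_le_finrank_range_coprod [Module.Finite K V] [Module.Finite K W]
    {ρ : V →ₗ[K] W} (hρ₀ : ∀ w, ρ (F₀ w) = w) (hρ₁ : ∀ w, ρ (F₁ w) = 0) {c d : ℕ}
    {e : ((Fin c → K) × (Fin d → K)) ≃ₗ[K] W} (he : ∀ x, e x ∈ F₁.ker ↔ x.2 = 0) :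
    Module.finrank K W + d ≤ Module.finrank K (F₀.coprod F₁).range := by
  let i : W × (Fin d → K) →ₗ[K] (F₀.coprod F₁).range := (F₀.coprod F₁).rangeRestrict ∘ₗ
    LinearMap.prodMap LinearMap.id (e.toLinearMap ∘ₗ LinearMap.inr K _ _)
  have hi : Function.Injective i := (injective_iff_map_eq_zero i).2 fun ⟨w, y⟩ h => by
    have h0 : F₀ w + F₁ (e (0, y)) = 0 := congrArg Subtype.val h
    have hw : w = 0 := by simpa [hρ₀, hρ₁] using congrArg ρ h0
    have hy : y = 0 := (he (0, y)).1 (by simpa [hw] using h0)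
    rw [hw, hy, Prod.mk_zero_zero]
  simpa using LinearMap.finrank_le_finrank_of_injective hi

theorem exists_add_eq_of_range_coprod {c d p q : ℕ} {e : ((Fin c → K) × (Fin d → K)) ≃ₗ[K] W}
    (he : ∀ x, e x ∈ F₁.ker ↔ x.2 = 0) {e' : ((Fin p → K) × (Fin q → K)) ≃ₗ[K] V}
    (he' : ∀ x, e' x ∈ (F₀.coprod F₁).range ↔ x.2 = 0) (v : V) :
    ∃ w y z, F₀ w + F₁ (e (0, y)) + e' (0, z) = v := by
  obtain ⟨x, rfl⟩ := e'.surjective v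
  obtain ⟨⟨w, w'⟩, hw⟩ := (he' (x.1, 0)).2 rfl
  obtain ⟨y, rfl⟩ := e.surjective w'
  refine ⟨w, y.2, x.2, ?_⟩
  have hy : F₁ (e (y.1, 0)) = 0 := (he _).2 rfl
  calc F₀ w + F₁ (e (0, y.2)) + e' (0, x.2)
      = F₀ w + F₁ (e (y.1, 0) + e (0, y.2)) + e' (0, x.2) := by rw [map_add, hy, zero_add]
    _ = e' (x.1, 0) + e' (0, x.2) := by rw [← map_add]; simpa using hw
    _ = e' x := by rw [← map_add]; simp

theorem Rep.HasβCoeffs.exists_injective_apply_eq_zero (hf : HasβCoeffs f F₀ F₁ F₂)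
    {D D' : Type} [AddCommGroup D] [Module K D] [AddCommGroup D'] [Module K D']
    {e : (D × D') ≃ₗ[K] W} (he : ∀ x, e x ∈ F₁.ker ↔ x.2 = 0) :
    ∃ j : W × W × D →ₗ[K] Rep P₁ W, Function.Injective j ∧ ∀ y, f (j y) = 0 := by
  refine ⟨(single P₁ K W 3).coprod
    ((single P₁ K W 4).coprod (single P₁ K W 6 ∘ₗ e.toLinearMap ∘ₗ LinearMap.inl K D D')),
    (injective_iff_map_eq_zero _).2 fun y hy => ?_, fun y => ?_⟩
  · have h3 := congrArg (coordₗ P₁ K W 3) hy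
    have h4 := congrArg (coordₗ P₁ K W 4) hy
    have h6 := congrArg (coordₗ P₁ K W 6) hy
    exact Prod.ext (by simpa using h3) (Prod.ext (by simpa using h4) (by simpa using h6))
  · have hy : F₁ (e (y.2.2, 0)) = 0 := (he _).2 rfl
    rw [hf.apply_eq]; ext i; fin_cases i <;> simp [hy]

/-- For `w ∈ ker F₁`, the generator `e₁ ⊗ w` imposes `β • φ w = 0` and contributes a copy of `U`;
elsewhere it imposes `β • φ w + α • β • F₁ w = 0` and contributes a copy of `Z`. -/
theorem exists_surjective_U_Z_P₂ (hg : Function.Surjective g) (hfg : Function.Exact f g)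
    (hf : HasβCoeffs f F₀ F₁ F₂) {c d p q : ℕ} {e : ((Fin c → K) × (Fin d → K)) ≃ₗ[K] W}
    (he : ∀ x, e x ∈ F₁.ker ↔ x.2 = 0) {e' : ((Fin p → K) × (Fin q → K)) ≃ₗ[K] V}
    (he' : ∀ x, e' x ∈ (F₀.coprod F₁).range ↔ x.2 = 0) :
    ∃ s : Rep U (Fin c → K) × Rep Z (Fin d → K) × Rep P₂ (Fin q → K) →ₗ[Op K] M,
      Function.Surjective s := by
  obtain ⟨φ, hφg, hφ, hφβ⟩ := hf.exists_β_smul_eq hfg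
  let γ₀ : V →ₗ[K] M := g.restrictScalars K ∘ₗ single P₂ K V 0
  have hγ₀ (v) : e₂ K • γ₀ v = γ₀ v := by
    rw [LinearMap.comp_apply, LinearMap.restrictScalars_apply, ← map_smul, e₂_smul_single_P₂]
  let φU : (Fin c → K) →ₗ[K] M := φ ∘ₗ e.toLinearMap ∘ₗ LinearMap.inl K _ _
  let φZ : (Fin d → K) →ₗ[K] M := φ ∘ₗ e.toLinearMap ∘ₗ LinearMap.inr K _ _
  let ψZ : (Fin d → K) →ₗ[K] M := -(γ₀ ∘ₗ F₁ ∘ₗ e.toLinearMap ∘ₗ LinearMap.inr K _ _)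
  let φP : (Fin q → K) →ₗ[K] M := γ₀ ∘ₗ e'.toLinearMap ∘ₗ LinearMap.inr K _ _
  have hφU (v) : e₂ K • φU v = φU v := hφ _
  have hφUβ (v) : β K • φU v = 0 := by
    have hv : F₁ (e (v, 0)) = 0 := (he (v, 0)).2 rfl
    simp [φU, hφβ, hv]
  have hφZ (v) : e₂ K • φZ v = φZ v := hφ _
  have hψZ (v) : e₂ K • ψZ v = ψZ v := by simp [ψZ, hγ₀]
  have hφψ (v) : β K • φZ v = α K • β K • ψZ v := by simp [φZ, ψZ, γ₀, hφβ]
  have hφP (v) : e₂ K • φP v = φP v := hγ₀ _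
  let s := (liftU φU hφU hφUβ).coprod ((liftZ φZ ψZ hφZ hψZ hφψ).coprod (liftP₂ φP hφP))
  refine ⟨s, surjective_of_range_sup_rad_eq_top s fun m => ?_⟩
  obtain ⟨x, rfl⟩ := hg m
  obtain ⟨w, y, z, hv⟩ := exists_add_eq_of_range_coprod he he' (x 0)
  let t := (single U K _ 0 (e.symm w).1,
    single Z K _ 0 (e.symm w).2 - single Z K _ 1 y, single P₂ K _ 0 z)
  have hφw : φU (e.symm w).1 + φZ (e.symm w).2 = φ w := by simp [φU, φZ, ← map_add]
  have hst : s t = φ w + γ₀ (F₁ (e (0, y))) + φP z := by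
    simp [s, t, ψZ, ← hφw, add_assoc]
  have hx : x - (⟨![F₀ w, F₂ w, 0, 0, 0, 0]⟩ + single P₂ K V 0 (F₁ (e (0, y)))
      + single P₂ K V 0 (e' (0, z))) ∈ rad K _ := by
    rw [mem_rad_P₂]
    simp [hv]
  refine ⟨t, ?_⟩
  rw [hst]
  simpa [hφg, γ₀, φP] using map_mem_rad g hx

theorem nonempty_equiv_U_Z_P₂ [Module.Finite K V] [Module.Finite K W] [Module.Finite K M]
    (hg : Function.Surjective g) (hfg : Function.Exact f g) (hf : HasβCoeffs f F₀ F₁ F₂)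
    {ρ : V →ₗ[K] W} (hρ₀ : ∀ w, ρ (F₀ w) = w) (hρ₁ : ∀ w, ρ (F₁ w) = 0)
    {c d p q : ℕ} {e : ((Fin c → K) × (Fin d → K)) ≃ₗ[K] W}
    (he : ∀ x, e x ∈ F₁.ker ↔ x.2 = 0) {e' : ((Fin p → K) × (Fin q → K)) ≃ₗ[K] V}
    (he' : ∀ x, e' x ∈ (F₀.coprod F₁).range ↔ x.2 = 0)
    (hp : Module.finrank K (F₀.coprod F₁).range = p) :
    Nonempty (M ≃ₗ[Op K] Rep U (Fin c → K) × Rep Z (Fin d → K) × Rep P₂ (Fin q → K)) := by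
  obtain ⟨s, hs⟩ := exists_surjective_U_Z_P₂ hg hfg hf he he'
  obtain ⟨j, hj, hfj⟩ := hf.exists_injective_apply_eq_zero he
  refine nonempty_equiv_of_surjective_of_kernel hg hfg hs hj hfj ?_
  have hpd := finrank_add_le_finrank_range_coprod hρ₀ hρ₁ he
  have hcd := e.finrank_eq
  have hpq := e'.finrank_eq
  simp only [Module.finrank_prod, finrank_eq, Module.finrank_fin_fun] at hcd hpq ⊢
  omega

/-- A copy of `U` forces every element of `e₁ • M` to be a multiple of `β`. -/
theorem IsRigidPresentation.mem_range_coprod (h : IsRigidPresentation f g)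
    (hf : HasβCoeffs f F₀ F₁ F₂) {w : W} (hw : w ≠ 0) (hw₁ : F₁ w = 0) (v : V) :
    v ∈ (F₀.coprod F₁).range := by
  let u : Rep P₂ V := ⟨![F₀ w, F₂ w, 0, 0, 0, 0]⟩
  have hu : f (single P₁ K W 0 w) = β K • u := by
    rw [hf]; ext i; fin_cases i <;> simp [u, hw₁]
  obtain ⟨k, hk⟩ := exists_hom_single_eq_P₁ h.extendsAlong hw
    (e₁_smul_α_smul (K := K) (β K • g (single P₂ K V 0 v)))
  obtain ⟨x, hx⟩ := h.surjective (k u)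
  have hmem : g (α K • β K • single P₂ K V 0 v - β K • x) = 0 := by
    rw [map_sub, map_smul, map_smul, map_smul, hx, ← hk, hu, map_smul, sub_self]
  obtain ⟨z, hz⟩ := (h.exact _).1 hmem
  exact ⟨(z 1, z 0), by
    simpa [hf.apply_eq, add_comm] using congrArg (coordₗ P₂ K V 4) hz⟩

theorem IsRigidPresentation.isSumOf_P₂_Z_or_isSumOf_Z_U [Module.Finite K V] [Module.Finite K W]
    [Module.Finite K M] (h : IsRigidPresentation f g) :
    IsSumOf (Op K) (Rep P₂ K) (Rep Z K) M ∨ IsSumOf (Op K) (Rep Z K) (Rep U K) M := by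
  obtain ⟨F₀, F₁, F₂, hf⟩ := exists_hasβCoeffs f
  by_cases hF₀ : ∃ w ≠ 0, F₀ w = 0
  · obtain ⟨w, hw, hw₀⟩ := hF₀
    exact .inr (isSumOf_Z_U h.surjective h.exact hf (h.e₁_smul_eq_zero hf hw hw₀))
  obtain ⟨ρ, hρ⟩ := LinearMap.exists_leftInverse_of_injective F₀ <| LinearMap.ker_eq_bot.2 <|
    (injective_iff_map_eq_zero F₀).2 fun w => not_imp_not.1 fun hw hw₀ => hF₀ ⟨w, hw, hw₀⟩
  have hρ (w) : ρ (F₀ w) = w := LinearMap.congr_fun hρ w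
  obtain ⟨θ, F₁', F₂', hf', hρ₁⟩ := hf.exists_equiv hρ
  have h' := h.congr θ (.refl _ _)
  obtain ⟨c, d, e, -, -, he⟩ := exists_prod_equiv_mem_iff F₁'.ker
  obtain ⟨p, q, e', hp, -, he'⟩ := exists_prod_equiv_mem_iff (F₀.coprod F₁').range
  obtain ⟨E⟩ := nonempty_equiv_U_Z_P₂ h'.surjective h'.exact hf' hρ hρ₁ he he' hp
  by_cases hF₁ : ∃ w ≠ 0, F₁' w = 0
  · obtain ⟨w, hw, hw₁⟩ := hF₁
    have hq (y : Fin q → K) : y = 0 := (he' (0, y)).1 (h'.mem_range_coprod hf' hw hw₁ _)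
    let _ : Unique (Fin q → K) := ⟨⟨0⟩, hq⟩
    exact .inr (isSumOf_of_equiv_rep (E.trans
      (((LinearEquiv.refl _ _).prodCongr .prodUnique).trans (.prodComm _ _ _))))
  · have hc (x : Fin c → K) : x = 0 := by
      have hx : F₁' (e (x, 0)) = 0 := (he (x, 0)).2 rfl
      have hx : e (x, 0) = 0 := not_imp_not.1 (fun hw hw₁ => hF₁ ⟨_, hw, hw₁⟩) hx
      simpa using hx
    let _ : Unique (Fin c → K) := ⟨⟨0⟩, hc⟩
    exact .inl (isSumOf_of_equiv_rep ((E.trans .uniqueProd).trans (.prodComm _ _ _)))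

end PresentationZ

end A5

namespace A5

open Shape A5.Rep

section Classification

/-- The shapes of the indecomposable `τ`-rigid modules, ordered in such a way that consecutive
modules are compatible: their direct sums are the `τ`-tilting modules. -/
def shape : Fin 6 → (n : ℕ) × Shape n := ![⟨2, Y⟩, ⟨3, X⟩, ⟨8, P₁⟩, ⟨6, P₂⟩, ⟨6, Z⟩, ⟨1, U⟩]

/-- The indecomposable `τ`-rigid modules. -/
abbrev Indec (K : Type) (i : Fin 6) : Type := Rep (shape i).2 K

variable (K : Type) [Field K] {M : Type} [AddCommGroup M] [Module (Op K) M]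

theorem isScalarTower_compHom_algebraMap :
    letI : Module K M := .compHom M (algebraMap K (Op K))
    IsScalarTower K (Op K) M :=
  letI : Module K M := .compHom M (algebraMap K (Op K))
  ⟨fun c r m => by rw [Algebra.smul_def, mul_smul]; rfl⟩

theorem isSumOf_P₁_P₂_of_projective [Module.Finite (Op K) M] [Module.Projective (Op K) M] :
    IsSumOf (Op K) (Rep P₁ K) (Rep P₂ K) M := by
  let _ : Module K M := .compHom M (algebraMap K (Op K))
  have : IsScalarTower K (Op K) M := isScalarTower_compHom_algebraMap K
  have := finite_of_finite_op K M
  obtain ⟨a₁, a₂, ⟨e⟩⟩ := exists_equiv_of_projective K M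
  exact isSumOf_of_equiv_rep e

theorem exists_isSumOf_of_isTauRigid [Module.Finite (Op K) M] (h : IsTauRigid (Op K) M) :
    ∃ i : Fin 5, IsSumOf (Op K) (Indec K i.castSucc) (Indec K i.succ) M := by
  let _ : Module K M := .compHom M (algebraMap K (Op K))
  have : IsScalarTower K (Op K) M := isScalarTower_compHom_algebraMap K
  have := finite_of_finite_op K M
  obtain ⟨a₁, a₂, b₁, b₂, f, g, hg, hfg, hker, hext⟩ := exists_minimal_presentation h
  have h : IsRigidPresentation f g := ⟨hg, hfg, hker, hext⟩
  rcases h.subsingleton_or_subsingleton_P₁ with hb₁ | ha₁ <;>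
    rcases h.subsingleton_or_subsingleton_P₂ with hb₂ | ha₂
  · let _ : Unique (Fin b₁ → K) := uniqueOfSubsingleton 0
    let _ : Unique (Fin b₂ → K) := uniqueOfSubsingleton 0
    have hinj : Function.Injective g := (injective_iff_map_eq_zero g).2 fun x hx => by
      obtain ⟨y, rfl⟩ := (hfg x).1 hx
      rw [Subsingleton.elim y 0, map_zero]
    exact ⟨2, isSumOf_of_equiv_rep (LinearEquiv.ofBijective g ⟨hinj, hg⟩).symm⟩
  · let _ : Unique (Fin b₁ → K) := uniqueOfSubsingleton 0
    let _ : Unique (Fin a₂ → K) := uniqueOfSubsingleton 0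
    rcases (h.congr LinearEquiv.uniqueProd.symm .prodUnique).isSumOf_X_P₁_or_isSumOf_Y_X with h | h
    exacts [⟨1, h⟩, ⟨0, h⟩]
  · let _ : Unique (Fin b₂ → K) := uniqueOfSubsingleton 0
    let _ : Unique (Fin a₁ → K) := uniqueOfSubsingleton 0
    rcases (h.congr LinearEquiv.prodUnique.symm .uniqueProd).isSumOf_P₂_Z_or_isSumOf_Z_U with h | h
    exacts [⟨3, h⟩, ⟨4, h⟩]
  · let _ : Unique (Fin a₁ → K) := uniqueOfSubsingleton 0
    let _ : Unique (Fin a₂ → K) := uniqueOfSubsingleton 0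
    have : Subsingleton M := hg.subsingleton
    exact ⟨2, 0, 0, ⟨0⟩⟩

end Classification

end A5

section Socle

variable {A M : Type*} [Ring A] [AddCommGroup M] [Module A M]

/-- If `f` and `1 - f` both have a non-zero kernel, then both kernels contain `s`, hence `s = 0`. -/
theorem isLocalRing_end_of_forall_mem [IsArtinian A M] {s : M} (hs : s ≠ 0)
    (h : ∀ N : Submodule A M, s ∉ N → N = ⊥) : IsLocalRing (Module.End A M) := by
  have : Nontrivial M := nontrivial_of_ne s 0 hs
  have hunit (f : Module.End A M) (hf : f s ≠ 0) : IsUnit f := (Module.End.isUnit_iff f).2 <|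
    IsArtinian.bijective_of_injective_endomorphism f (LinearMap.ker_eq_bot.1 (h _ hf))
  refine .of_isUnit_or_isUnit_one_sub_self fun f => ?_
  by_cases hf : f s = 0
  · exact .inr (hunit _ (by simpa [hf] using hs))
  · exact .inl (hunit f hf)

end Socle

namespace A5

open Shape A5.Rep

section Indecomposable

variable (K : Type) [Field K]

theorem Rep.isLocalRing_end {K} [Field K] {n : ℕ} {S : Shape n} (k : Fin n)
    (h : ∀ x : Rep S K, (∀ (r : Op K) (c : K), r • x = single S K K k c → c = 0) → x = 0) :
    IsLocalRing (Module.End (Op K) (Rep S K)) := by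
  have : IsArtinian (Op K) (Rep S K) := isArtinian_of_tower K inferInstance
  refine isLocalRing_end_of_forall_mem (s := single S K K k 1) (fun hs => ?_)
    fun N hN => eq_bot_iff.2 fun x hx => (h x fun r c hr => ?_)
  · simpa using congrArg (coordₗ S K K k) hs
  · by_contra hc
    refine hN ?_
    have hmem : (c⁻¹ • r) • x ∈ N := N.smul_mem _ hx
    rwa [smul_assoc, hr, ← map_smul, smul_eq_mul, inv_mul_cancel₀ hc] at hmem

theorem isLocalRing_end_P₁ : IsLocalRing (Module.End (Op K) (Rep P₁ K)) :=
  isLocalRing_end 4 fun x h => by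
    have h₀ : x 0 = 0 := h (α K * α K * α K * α K) _ (by
      ext i; fin_cases i <;> simp [mul_smul])
    have h₁ : x 1 = 0 := h (α K * α K * α K) _ (by
      ext i; fin_cases i <;> simp [mul_smul, h₀])
    have h₂ : x 2 = 0 := h (α K * α K) _ (by
      ext i; fin_cases i <;> simp [mul_smul, h₀, h₁])
    have h₃ : x 3 = 0 := h (α K) _ (by
      ext i; fin_cases i <;> simp [h₀, h₁, h₂])
    have h₄ : x 4 = 0 := h (e₁ K) _ (by
      ext i; fin_cases i <;> simp [h₀, h₁, h₂, h₃])
    have h₅ : x 5 = 0 := h (α K * α K * β K) _ (by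
      ext i; fin_cases i <;> simp [mul_smul])
    have h₆ : x 6 = 0 := h (α K * β K) _ (by
      ext i; fin_cases i <;> simp [mul_smul, h₅])
    have h₇ : x 7 = 0 := h (β K) _ (by
      ext i; fin_cases i <;> simp [h₅, h₆])
    ext i; fin_cases i <;> assumption

theorem isLocalRing_end_P₂ : IsLocalRing (Module.End (Op K) (Rep P₂ K)) :=
  isLocalRing_end 2 fun x h => by
    have h₀ : x 0 = 0 := h (γ K * α K * α K * β K) _ (by
      ext i; fin_cases i <;> simp [mul_smul])
    have h₁ : x 1 = 0 := h (γ K * β K) _ (by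
      ext i; fin_cases i <;> simp [mul_smul, h₀])
    have h₂ : x 2 = 0 := h (e₂ K) _ (by
      ext i; fin_cases i <;> simp [h₀, h₁])
    have h₃ : x 3 = 0 := h (γ K * α K * α K) _ (by
      ext i; fin_cases i <;> simp [mul_smul])
    have h₄ : x 4 = 0 := h (γ K * α K) _ (by
      ext i; fin_cases i <;> simp [mul_smul])
    have h₅ : x 5 = 0 := h (γ K) _ (by
      ext i; fin_cases i <;> simp [h₃])
    ext i; fin_cases i <;> assumption

theorem isLocalRing_end_X : IsLocalRing (Module.End (Op K) (Rep X K)) :=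
  isLocalRing_end 2 fun x h => by
    have h₀ : x 0 = 0 := h (γ K * α K) _ (by
      ext i; fin_cases i <;> simp [mul_smul])
    have h₁ : x 1 = 0 := h (γ K) _ (by
      ext i; fin_cases i <;> simp)
    have h₂ : x 2 = 0 := h (e₂ K) _ (by
      ext i; fin_cases i <;> simp)
    ext i; fin_cases i <;> assumption

theorem isLocalRing_end_Y : IsLocalRing (Module.End (Op K) (Rep Y K)) :=
  isLocalRing_end 1 fun x h => by
    have h₀ : x 0 = 0 := h (α K) _ (by
      ext i; fin_cases i <;> simp)
    have h₁ : x 1 = 0 := h (e₁ K) _ (by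
      ext i; fin_cases i <;> simp [h₀])
    ext i; fin_cases i <;> assumption

theorem isLocalRing_end_Z : IsLocalRing (Module.End (Op K) (Rep Z K)) :=
  isLocalRing_end 5 fun x h => by
    have h₁ : x 1 = 0 := h (α K * α K * β K) _ (by
      ext i; fin_cases i <;> simp [mul_smul])
    have h₀ : x 0 = 0 := h (α K * β K) _ (by
      ext i; fin_cases i <;> simp [mul_smul, h₁])
    have h₂ : x 2 = 0 := h (β K) _ (by
      ext i; fin_cases i <;> simp [h₀, h₁])
    have h₃ : x 3 = 0 := h (α K * α K) _ (by
      ext i; fin_cases i <;> simp [mul_smul])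
    have h₄ : x 4 = 0 := h (α K) _ (by
      ext i; fin_cases i <;> simp [h₃])
    have h₅ : x 5 = 0 := h (e₁ K) _ (by
      ext i; fin_cases i <;> simp [h₃, h₄])
    ext i; fin_cases i <;> assumption

theorem isLocalRing_end_U : IsLocalRing (Module.End (Op K) (Rep U K)) :=
  isLocalRing_end 0 fun x h => by
    have h₀ : x 0 = 0 := h (e₂ K) _ (by
      ext i; fin_cases i; simp)
    ext i; fin_cases i; assumption

instance (i : Fin 6) : IsLocalRing (Module.End (Op K) (Indec K i)) := by
  fin_cases i
  exacts [isLocalRing_end_Y K, isLocalRing_end_X K, isLocalRing_end_P₁ K, isLocalRing_end_P₂ K,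
    isLocalRing_end_Z K, isLocalRing_end_U K]

theorem isEmpty_equiv_P₂_Z : IsEmpty (Rep P₂ K ≃ₗ[Op K] Rep Z K) := by
  refine ⟨fun e => ?_⟩
  have hZ (z : Rep Z K) : γ K • α K • α K • β K • z = 0 := by
    ext i; fin_cases i <;> simp
  have hP₂ : γ K • α K • α K • β K • single P₂ K K 0 1 = single P₂ K K 2 1 := by
    ext i; fin_cases i <;> simp
  have h : e (single P₂ K K 2 1) = 0 := by simp only [← hP₂, map_smul, hZ]
  simpa using congrArg (coordₗ P₂ K K 2) (e.map_eq_zero_iff.1 h)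

variable {K}

theorem eq_of_nonempty_equiv {i j : Fin 6} (h : Nonempty (Indec K i ≃ₗ[Op K] Indec K j)) :
    i = j := by
  obtain ⟨e⟩ := h
  have hn : (shape i).1 = (shape j).1 := by
    simpa [finrank_eq] using (e.restrictScalars K).finrank_eq
  have h (i j : Fin 6) (h : (shape i).1 = (shape j).1) :
      i = j ∨ (i = 3 ∧ j = 4) ∨ (i = 4 ∧ j = 3) := by
    decide +revert
  rcases h i j hn with h | ⟨rfl, rfl⟩ | ⟨rfl, rfl⟩
  · exact h
  · exact ((isEmpty_equiv_P₂_Z K).false e).elim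
  · exact ((isEmpty_equiv_P₂_Z K).false e.symm).elim

instance (i : Fin 6) : NeZero (shape i).1 := ⟨by decide +revert⟩

theorem eq_of_isRetract {i j : Fin 6} (h : IsRetract (Op K) (Indec K i) (Indec K j)) : i = j :=
  eq_of_nonempty_equiv h.nonempty_equiv

end Indecomposable

end A5

namespace A5

open Shape A5.Rep

section Generator

variable {K : Type} [Field K] {N : Type} [AddCommGroup N] [Module (Op K) N] [Module K N]
  [IsScalarTower K (Op K) N]

variable (K) in
/-- The generator of the projective module `P₁`. -/
def gen₁ : Rep P₁ K := single P₁ K K 0 1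

variable (K) in
/-- The generator of the projective module `P₂`. -/
def gen₂ : Rep P₂ K := single P₂ K K 0 1

/-- The map out of `P₁` sending the generator to `e₁ • n`. -/
def homP₁ (n : N) : Rep P₁ K →ₗ[Op K] N :=
  liftP₁ (.toSpanSingleton K N (e₁ K • n)) fun v => by simp [smul_comm _ v]

/-- The map out of `P₂` sending the generator to `e₂ • n`. -/
def homP₂ (n : N) : Rep P₂ K →ₗ[Op K] N :=
  liftP₂ (.toSpanSingleton K N (e₂ K • n)) fun v => by simp [smul_comm _ v]

@[simp]
theorem homP₁_gen₁ (n : N) : homP₁ n (gen₁ K) = e₁ K • n := by simp [homP₁, gen₁]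

@[simp]
theorem homP₂_gen₂ (n : N) : homP₂ n (gen₂ K) = e₂ K • n := by simp [homP₂, gen₂]

theorem homP₁_apply (n : N) (x : Rep P₁ K) : homP₁ n x = x 0 • e₁ K • n + x 1 • α K • n
    + x 2 • α K • α K • n + x 3 • α K • α K • α K • n + x 4 • α K • α K • α K • α K • n
    + x 5 • γ K • n + x 6 • γ K • α K • n + x 7 • γ K • α K • α K • n := by
  simp [homP₁, liftP₁, smul_comm (x _)]

theorem homP₂_apply (n : N) (x : Rep P₂ K) : homP₂ n x = x 0 • e₂ K • n + x 1 • γ K • β K • n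
    + x 2 • γ K • α K • α K • β K • n + x 3 • β K • n + x 4 • α K • β K • n
    + x 5 • α K • α K • β K • n := by
  simp [homP₂, liftP₂, smul_comm (x _)]

theorem hom_ext_gen₁ {f g : Rep P₁ K →ₗ[Op K] N} (h : f (gen₁ K) = g (gen₁ K)) : f = g :=
  hom_ext_P₁ (K := K) fun v => LinearMap.congr_fun (LinearMap.ext_ring
    (f := f.restrictScalars K ∘ₗ single P₁ K K 0) (g := g.restrictScalars K ∘ₗ single P₁ K K 0) h) v

theorem hom_ext_gen₂ {f g : Rep P₂ K →ₗ[Op K] N} (h : f (gen₂ K) = g (gen₂ K)) : f = g :=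
  hom_ext_P₂ (K := K) fun v => LinearMap.congr_fun (LinearMap.ext_ring
    (f := f.restrictScalars K ∘ₗ single P₂ K K 0) (g := g.restrictScalars K ∘ₗ single P₂ K K 0) h) v

@[simp]
theorem e₁_smul_gen₁ : e₁ K • gen₁ K = gen₁ K := e₁_smul_single_P₁ _

@[simp]
theorem e₂_smul_gen₂ : e₂ K • gen₂ K = gen₂ K := e₂_smul_single_P₂ _

end Generator

section TauRigid

variable {K : Type} [Field K] {N : Type} [AddCommGroup N] [Module (Op K) N]

variable (K) in
/-- The relation `γ = 0` defining `X`. -/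
def relX : Rep P₂ K →ₗ[Op K] Rep P₁ K := homP₂ (γ K • gen₁ K)

variable (K) in
/-- The relations `γ = 0` and `γα = 0` defining `Y`. -/
def relY : Rep P₂ K × Rep P₂ K →ₗ[Op K] Rep P₁ K :=
  (homP₂ (γ K • gen₁ K)).coprod (homP₂ (γ K • α K • gen₁ K))

variable (K) in
/-- The relation `βφ = αβψ` defining `Z`. -/
def relZ : Rep P₁ K →ₗ[Op K] Rep P₂ K × Rep P₂ K :=
  (homP₁ (β K • gen₂ K)).prod (-homP₁ (α K • β K • gen₂ K))

variable (K) in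
/-- The relation `β = 0` defining `U`. -/
def relU : Rep P₁ K →ₗ[Op K] Rep P₂ K := homP₁ (β K • gen₂ K)

theorem isProjectivePresentation_X :
    IsProjectivePresentation (relX K) (homP₁ (single X K K 0 1)) where
  surjective x := by
    refine ⟨⟨![x 0, x 1, 0, 0, 0, 0, x 2, 0]⟩, ?_⟩
    ext i; fin_cases i <;> simp [homP₁_apply]
  exact := LinearMap.exact_iff.2 <| le_antisymm (fun x hx => by
      have h0 : x 0 = 0 := by simpa [homP₁_apply] using congrArg (· 0) (LinearMap.mem_ker.1 hx)
      have h1 : x 1 = 0 := by simpa [homP₁_apply] using congrArg (· 1) (LinearMap.mem_ker.1 hx)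
      have h6 : x 6 = 0 := by simpa [homP₁_apply] using congrArg (· 2) (LinearMap.mem_ker.1 hx)
      refine ⟨⟨![x 5, x 7, 0, x 2, x 3, x 4]⟩, ?_⟩
      ext i; fin_cases i <;> simp [relX, gen₁, homP₂_apply, h0, h1, h6]) <|
    LinearMap.range_le_ker_iff.2 <| hom_ext_gen₂ <| by
      ext i; fin_cases i <;> simp [relX]

theorem isProjectivePresentation_Y :
    IsProjectivePresentation (relY K) (homP₁ (single Y K K 0 1)) where
  surjective x := by
    refine ⟨⟨![x 0, x 1, 0, 0, 0, 0, 0, 0]⟩, ?_⟩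
    ext i; fin_cases i <;> simp [homP₁_apply]
  exact := LinearMap.exact_iff.2 <| le_antisymm (fun x hx => by
      have h0 : x 0 = 0 := by simpa [homP₁_apply] using congrArg (· 0) (LinearMap.mem_ker.1 hx)
      have h1 : x 1 = 0 := by simpa [homP₁_apply] using congrArg (· 1) (LinearMap.mem_ker.1 hx)
      refine ⟨(⟨![x 5, x 7, 0, x 2, x 3, x 4]⟩, ⟨![x 6, 0, 0, 0, 0, 0]⟩), ?_⟩
      ext i; fin_cases i <;> simp [relY, gen₁, homP₂_apply, h0, h1]) <|
    LinearMap.range_le_ker_iff.2 <| LinearMap.prod_ext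
      (hom_ext_gen₂ <| by ext i; fin_cases i <;> simp [relY])
      (hom_ext_gen₂ <| by ext i; fin_cases i <;> simp [relY])

theorem homP₁_β_smul_gen₂ (x : Rep P₁ K) :
    homP₁ (β K • gen₂ K) x = ⟨![0, x 5, x 7, x 0, x 1, x 2]⟩ := by
  ext i; fin_cases i <;> simp [gen₂, homP₁_apply]

theorem homP₁_α_smul_β_smul_gen₂ (x : Rep P₁ K) :
    homP₁ (α K • β K • gen₂ K) x = ⟨![0, 0, x 6, 0, x 0, x 1]⟩ := by
  ext i; fin_cases i <;> simp [gen₂, homP₁_apply]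

theorem isProjectivePresentation_Z : IsProjectivePresentation (relZ K)
    ((homP₂ (single Z K K 0 1)).coprod (homP₂ (single Z K K 1 1))) where
  surjective x := by
    refine ⟨(⟨![x 0, 0, 0, 0, 0, 0]⟩, ⟨![x 1, x 2, 0, x 3, x 4, x 5]⟩), ?_⟩
    ext i; fin_cases i <;> simp [homP₂_apply]
  exact := LinearMap.exact_iff.2 <| le_antisymm (fun ⟨x, y⟩ hx => by
      have h (i : Fin 6) := congrArg (· i) (LinearMap.mem_ker.1 hx)
      have h0 : x 0 = 0 := by simpa [homP₂_apply] using h 0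
      have h1 : y 0 = 0 := by simpa [homP₂_apply] using h 1
      have h2 : y 1 = 0 := by simpa [homP₂_apply] using h 2
      have h3 : y 3 = 0 := by simpa [homP₂_apply] using h 3
      have h4 : x 3 + y 4 = 0 := by simpa [homP₂_apply] using h 4
      have h5 : x 4 + y 5 = 0 := by simpa [homP₂_apply] using h 5
      refine ⟨⟨![x 3, x 4, x 5, 0, 0, x 1, -y 2, x 2]⟩,
        Prod.ext ((homP₁_β_smul_gen₂ _).trans ?_)
          ((congrArg Neg.neg (homP₁_α_smul_β_smul_gen₂ _)).trans ?_)⟩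
      · ext i; fin_cases i <;> simp [h0]
      · ext i; fin_cases i <;> simp [h1, h2, h3, neg_eq_of_add_eq_zero_right h4,
          neg_eq_of_add_eq_zero_right h5]) <|
    LinearMap.range_le_ker_iff.2 <| hom_ext_gen₁ <| by
      ext i; fin_cases i <;> simp [relZ]

theorem isProjectivePresentation_U :
    IsProjectivePresentation (relU K) (homP₂ (single U K K 0 1)) where
  surjective x := by
    refine ⟨⟨![x 0, 0, 0, 0, 0, 0]⟩, ?_⟩
    ext i; fin_cases i; simp [homP₂_apply]
  exact := LinearMap.exact_iff.2 <| le_antisymm (fun x hx => by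
      have h0 : x 0 = 0 := by simpa [homP₂_apply] using congrArg (· 0) (LinearMap.mem_ker.1 hx)
      refine ⟨⟨![x 3, x 4, x 5, 0, 0, x 1, 0, x 2]⟩, ?_⟩
      ext i; fin_cases i <;> simp [relU, homP₁_β_smul_gen₂, h0]) <|
    LinearMap.range_le_ker_iff.2 <| hom_ext_gen₁ <| by
      ext i; fin_cases i; simp [relU]

variable [Module K N] [IsScalarTower K (Op K) N]

theorem extendsAlong_relX (h : ∀ n : N, ∃ m : N, γ K • m = e₂ K • n) :
    ExtendsAlong N (relX K) := fun u => by
  obtain ⟨m, hm⟩ := h (u (gen₂ K))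
  exact ⟨homP₁ m, hom_ext_gen₂ <| by simp [relX, hm, ← map_smul]⟩

theorem extendsAlong_relY
    (h : ∀ n n' : N, ∃ m : N, γ K • m = e₂ K • n ∧ γ K • α K • m = e₂ K • n') :
    ExtendsAlong N (relY K) := fun u => by
  obtain ⟨m, hm, hm'⟩ := h (u (gen₂ K, 0)) (u (0, gen₂ K))
  refine ⟨homP₁ m, LinearMap.prod_ext (hom_ext_gen₂ ?_) (hom_ext_gen₂ ?_)⟩
  · simp [relY, hm, ← map_smul]
  · simp [relY, hm', ← map_smul]

theorem extendsAlong_relZ (h : ∀ n : N, ∃ m m' : N, β K • m + α K • β K • m' = e₁ K • n) :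
    ExtendsAlong N (relZ K) := fun u => by
  obtain ⟨m, m', hm⟩ := h (u (gen₁ K))
  refine ⟨(homP₂ m).coprod (-homP₂ m'), hom_ext_gen₁ ?_⟩
  simp [relZ, hm, ← map_smul]

theorem extendsAlong_relU (h : ∀ n : N, ∃ m : N, β K • m = e₁ K • n) :
    ExtendsAlong N (relU K) := fun u => by
  obtain ⟨m, hm⟩ := h (u (gen₁ K))
  exact ⟨homP₂ m, hom_ext_gen₁ <| by simp [relU, hm, ← map_smul]⟩

variable (K)

theorem isTauRigid_Y : IsTauRigid (Op K) (Rep Y K) :=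
  isProjectivePresentation_Y.isTauRigid <| extendsAlong_relY fun n n' =>
    ⟨0, by ext i; fin_cases i <;> simp, by ext i; fin_cases i <;> simp⟩

theorem isTauRigid_U : IsTauRigid (Op K) (Rep U K) :=
  isProjectivePresentation_U.isTauRigid <| extendsAlong_relU fun n =>
    ⟨0, by ext i; fin_cases i; simp⟩

theorem isTauRigid_Y_X : IsTauRigid (Op K) (Rep Y K × Rep X K) :=
  isProjectivePresentation_Y.isTauRigid_prod isProjectivePresentation_X
    (extendsAlong_relY fun n n' => ⟨0, by ext i; fin_cases i <;> simp,
      by ext i; fin_cases i <;> simp⟩)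
    (extendsAlong_relY fun n n' => ⟨⟨![n' 2, n 2, 0]⟩, by ext i; fin_cases i <;> simp,
      by ext i; fin_cases i <;> simp⟩)
    (extendsAlong_relX fun n => ⟨0, by ext i; fin_cases i <;> simp⟩)
    (extendsAlong_relX fun n => ⟨⟨![0, n 2, 0]⟩, by ext i; fin_cases i <;> simp⟩)

theorem isTauRigid_X_P₁ : IsTauRigid (Op K) (Rep X K × Rep P₁ K) :=
  isProjectivePresentation_X.isTauRigid_prod isProjectivePresentation_id
    (extendsAlong_relX fun n => ⟨⟨![0, n 2, 0]⟩, by ext i; fin_cases i <;> simp⟩)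
    (extendsAlong_relX fun n => ⟨⟨![n 5, n 6, n 7, 0, 0, 0, 0, 0]⟩,
      by ext i; fin_cases i <;> simp⟩)
    (extendsAlong_of_subsingleton _) (extendsAlong_of_subsingleton _)

theorem isTauRigid_P₁_P₂ : IsTauRigid (Op K) (Rep P₁ K × Rep P₂ K) :=
  isProjectivePresentation_id.isTauRigid_prod isProjectivePresentation_id
    (extendsAlong_of_subsingleton _) (extendsAlong_of_subsingleton _)
    (extendsAlong_of_subsingleton _) (extendsAlong_of_subsingleton _)

theorem isTauRigid_P₂_Z : IsTauRigid (Op K) (Rep P₂ K × Rep Z K) :=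
  isProjectivePresentation_id.isTauRigid_prod isProjectivePresentation_Z
    (extendsAlong_of_subsingleton _) (extendsAlong_of_subsingleton _)
    (extendsAlong_relZ fun n => ⟨⟨![n 3, n 5, 0, 0, 0, 0]⟩, ⟨![n 4, 0, 0, 0, 0, 0]⟩,
      by ext i; fin_cases i <;> simp⟩)
    (extendsAlong_relZ fun n => ⟨⟨![n 4, n 3, n 5, 0, 0, 0]⟩, 0, by ext i; fin_cases i <;> simp⟩)

theorem isTauRigid_Z_U : IsTauRigid (Op K) (Rep Z K × Rep U K) :=
  isProjectivePresentation_Z.isTauRigid_prod isProjectivePresentation_U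
    (extendsAlong_relZ fun n => ⟨⟨![n 4, n 3, n 5, 0, 0, 0]⟩, 0, by ext i; fin_cases i <;> simp⟩)
    (extendsAlong_relZ fun n => ⟨0, 0, by ext i; fin_cases i; simp⟩)
    (extendsAlong_relU fun n => ⟨⟨![n 4, n 3, n 5, 0, 0, 0]⟩, by ext i; fin_cases i <;> simp⟩)
    (extendsAlong_relU fun n => ⟨0, by ext i; fin_cases i; simp⟩)

theorem isTauRigid_indec_prod_indec (i : Fin 5) :
    IsTauRigid (Op K) (Indec K i.castSucc × Indec K i.succ) := by
  fin_cases i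
  exacts [isTauRigid_Y_X K, isTauRigid_X_P₁ K, isTauRigid_P₁_P₂ K, isTauRigid_P₂_Z K,
    isTauRigid_Z_U K]

end TauRigid

end A5

section Counting

theorem supportTauTiltingCount_card {ι : Type*} [Fintype ι] (f : ι → ModCat R)
    (hf : ∀ x, IsSupportTauTilting R (f x)) (hf' : ∀ x, IsBasic R (f x))
    (hinj : ∀ x y, Nonempty (f x ≃ₗ[R] f y) → x = y)
    (hsurj : ∀ M : ModCat R, IsSupportTauTilting R M → IsBasic R M →
      ∃ x, Nonempty (M ≃ₗ[R] f x)) : SupportTauTiltingCount R (Fintype.card ι) := by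
  let e := Fintype.equivFin ι
  refine ⟨f ∘ e.symm, fun i => ⟨(isSupportTauTiltingMod_iff _).2 (hf _),
    (isBasicMod_iff _).2 (hf' _)⟩, fun i j ⟨φ⟩ => e.symm.injective (hinj _ _ ⟨φ.toLinearEquiv⟩),
    fun M hM hM' => ?_⟩
  obtain ⟨x, ⟨φ⟩⟩ := hsurj M ((isSupportTauTiltingMod_iff M).1 hM) ((isBasicMod_iff M).1 hM')
  exact ⟨e x, ⟨by simpa using φ.toModuleIso⟩⟩

end Counting

namespace A5

open Shape A5.Rep

section Support

variable {K : Type} [Field K]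

theorem forall_hom_P₁_eq_zero_iff {n : ℕ} {S : Shape n} :
    (∀ f : Rep P₁ K →ₗ[Op K] Rep S K, f = 0) ↔ ∀ i, S.isOne i = false := by
  constructor
  · intro h i
    have h : e₁ K • (⟨fun _ => 1⟩ : Rep S K) = 0 := by
      rw [← homP₁_gen₁, h (homP₁ _), LinearMap.zero_apply]
    simpa using congrArg (· i) h
  · intro h f
    refine hom_ext_gen₁ ?_
    rw [← e₁_smul_gen₁, map_smul]
    ext i
    simp [h]

theorem forall_hom_P₂_eq_zero_iff {n : ℕ} {S : Shape n} :
    (∀ f : Rep P₂ K →ₗ[Op K] Rep S K, f = 0) ↔ ∀ i, S.isOne i = true := by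
  constructor
  · intro h i
    have h : e₂ K • (⟨fun _ => 1⟩ : Rep S K) = 0 := by
      rw [← homP₂_gen₂, h (homP₂ _), LinearMap.zero_apply]
    simpa using congrArg (· i) h
  · intro h f
    refine hom_ext_gen₂ ?_
    rw [← e₂_smul_gen₂, map_smul]
    ext i
    simp [h]

theorem forall_hom_P₁_indec_eq_zero_iff {k : Fin 6} :
    (∀ f : Rep P₁ K →ₗ[Op K] Indec K k, f = 0) ↔ k = 5 := by
  rw [forall_hom_P₁_eq_zero_iff]
  decide +revert

theorem forall_hom_P₂_indec_eq_zero_iff {k : Fin 6} :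
    (∀ f : Rep P₂ K →ₗ[Op K] Indec K k, f = 0) ↔ k = 0 := by
  rw [forall_hom_P₂_eq_zero_iff]
  decide +revert

end Support

section SupportTauTilting

variable {K : Type} [Field K] {M P : Type} [AddCommGroup M] [Module (Op K) M] [AddCommGroup P]
  [Module (Op K) P]

/-- In a `τ`-rigid pair `(M × N, P × Q)`, the modules `N` and `Q` are direct sums of modules
`Indec K k`, respectively of `P₁` and `P₂`; thus maximality of `(M, P)` can be tested on these. -/
theorem isSupportTauTilting_of_isTauRigidPair (h : IsTauRigidPair (Op K) M P)
    (hM : ∀ (N : Type) [AddCommGroup N] [Module (Op K) N], IsTauRigidPair (Op K) (M × N) P →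
      ∀ k, IsRetract (Op K) (Indec K k) (M × N) → IsRetract (Op K) (Indec K k) M)
    (hP₁ : (∀ f : Rep P₁ K →ₗ[Op K] M, f = 0) → IsRetract (Op K) (Rep P₁ K) P)
    (hP₂ : (∀ f : Rep P₂ K →ₗ[Op K] M, f = 0) → IsRetract (Op K) (Rep P₂ K) P) :
    IsSupportTauTilting (Op K) M := by
  refine ⟨.of _ P, h, fun N Q hNQ => ⟨?_, ?_⟩⟩
  · have hN := hNQ.of_isRetract_right .fst_prod
    have := hN.1
    obtain ⟨i, hi⟩ := exists_isSumOf_of_isTauRigid K hN.2.1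
    exact .of_isRetract_left .snd_prod (hi.isMemAdd (hM N hN _) (hM N hN _))
  · obtain ⟨-, -, _, _, hQ⟩ := hNQ.of_isRetract_right .snd_prod
    exact (isSumOf_P₁_P₂_of_projective K).isMemAdd (fun h => hP₁ (h.hom_eq_zero .fst_prod hQ))
      fun h => hP₂ (h.hom_eq_zero .fst_prod hQ)

theorem eq_zero_of_isRetract_of_hom_P₂ {k : Fin 6} (hk : IsRetract (Op K) (Indec K k) M)
    (h : ∀ f : Rep P₂ K →ₗ[Op K] M, f = 0) : k = 0 :=
  forall_hom_P₂_indec_eq_zero_iff.1 (IsRetract.hom_eq_zero .refl hk h)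

theorem eq_five_of_isRetract_of_hom_P₁ {k : Fin 6} (hk : IsRetract (Op K) (Indec K k) M)
    (h : ∀ f : Rep P₁ K →ₗ[Op K] M, f = 0) : k = 5 :=
  forall_hom_P₁_indec_eq_zero_iff.1 (IsRetract.hom_eq_zero .refl hk h)

theorem eq_of_isSumOf_of_isRetract {i j : Fin 5}
    (h : IsSumOf (Op K) (Indec K j.castSucc) (Indec K j.succ) M)
    (hi : IsRetract (Op K) (Indec K i.castSucc) M) (hi' : IsRetract (Op K) (Indec K i.succ) M) :
    i = j := by
  have h₁ := (h.isRetract_or_isRetract hi).imp eq_of_isRetract eq_of_isRetract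
  have h₂ := (h.isRetract_or_isRetract hi').imp eq_of_isRetract eq_of_isRetract
  simp only [Fin.ext_iff, Fin.val_castSucc, Fin.val_succ] at *
  lia

variable (K)

theorem isSupportTauTilting_indec_prod_indec (i : Fin 5) :
    IsSupportTauTilting (Op K) (Indec K i.castSucc × Indec K i.succ) := by
  refine isSupportTauTilting_of_isTauRigidPair (P := PUnit)
    (isTauRigidPair_of_subsingleton_right (isTauRigid_indec_prod_indec K i))
    (fun N _ _ hN k hk => ?_) (fun h => ?_) fun h => ?_
  · have := hN.1
    obtain ⟨j, hj⟩ := exists_isSumOf_of_isTauRigid K hN.2.1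
    obtain rfl := eq_of_isSumOf_of_isRetract hj
      (.trans .fst_prod .fst_prod) (.trans .snd_prod .fst_prod)
    rcases hj.isRetract_or_isRetract hk with hk | hk
    · exact hk.trans .fst_prod
    · exact hk.trans .snd_prod
  · exact absurd (eq_five_of_isRetract_of_hom_P₁ .fst_prod h) (by simp [Fin.ext_iff]; lia)
  · exact absurd (eq_zero_of_isRetract_of_hom_P₂ .snd_prod h) (Fin.succ_ne_zero i)

theorem isSupportTauTilting_Y : IsSupportTauTilting (Op K) (Indec K 0) := by
  refine isSupportTauTilting_of_isTauRigidPair (P := Rep P₂ K) ⟨inferInstance, isTauRigid_Y K,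
    inferInstance, inferInstance, forall_hom_P₂_indec_eq_zero_iff.2 rfl⟩
    (fun N _ _ hN k hk => ?_) (fun h => ?_) fun _ => .refl
  · obtain rfl := eq_zero_of_isRetract_of_hom_P₂ hk hN.2.2.2.2
    exact .refl
  · exact absurd (forall_hom_P₁_indec_eq_zero_iff.1 h) (by decide)

theorem isSupportTauTilting_U : IsSupportTauTilting (Op K) (Indec K 5) := by
  refine isSupportTauTilting_of_isTauRigidPair (P := Rep P₁ K) ⟨inferInstance, isTauRigid_U K,
    inferInstance, inferInstance, forall_hom_P₁_indec_eq_zero_iff.2 rfl⟩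
    (fun N _ _ hN k hk => ?_) (fun _ => .refl) fun h => ?_
  · obtain rfl := eq_five_of_isRetract_of_hom_P₁ hk hN.2.2.2.2
    exact .refl
  · exact absurd (forall_hom_P₂_indec_eq_zero_iff.1 h) (by decide)

theorem isSupportTauTilting_punit : IsSupportTauTilting (Op K) PUnit := by
  refine isSupportTauTilting_of_isTauRigidPair (P := Rep P₁ K × Rep P₂ K) ⟨inferInstance,
    isTauRigid_of_projective, inferInstance, inferInstance, fun _ => Subsingleton.elim _ _⟩
    (fun N _ _ hN k hk => ?_) (fun _ => .fst_prod) fun _ => .snd_prod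
  have h₁ := eq_five_of_isRetract_of_hom_P₁ hk
    (IsRetract.hom_eq_zero .fst_prod .refl hN.2.2.2.2)
  have h₂ := eq_zero_of_isRetract_of_hom_P₂ hk
    (IsRetract.hom_eq_zero .snd_prod .refl hN.2.2.2.2)
  exact absurd (h₁.symm.trans h₂) (by decide)

end SupportTauTilting

section Completeness

variable {K : Type} [Field K] {M : Type} [AddCommGroup M] [Module (Op K) M]

theorem subsingleton_of_isTauRigidPair {P : Type} [AddCommGroup P] [Module (Op K) P]
    (h : IsTauRigidPair (Op K) M P) {k : Fin 6} (e : M ≃ₗ[Op K] Indec K k) (h₀ : k ≠ 0)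
    (h₅ : k ≠ 5) : Subsingleton P := by
  obtain ⟨-, -, _, _, hP⟩ := h
  refine (isSumOf_P₁_P₂_of_projective K).subsingleton (fun hP₁ => h₅ ?_) fun hP₂ => h₀ ?_
  · exact eq_five_of_isRetract_of_hom_P₁ (.of_equiv e.symm) (hP₁.hom_eq_zero .refl hP)
  · exact eq_zero_of_isRetract_of_hom_P₂ (.of_equiv e.symm) (hP₂.hom_eq_zero .refl hP)

theorem eq_zero_or_eq_five_of_isSupportTauTilting (h : IsSupportTauTilting (Op K) M) {k : Fin 6}
    (e : M ≃ₗ[Op K] Indec K k) : k = 0 ∨ k = 5 := by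
  by_contra! hk
  obtain ⟨P, hMP, hmax⟩ := h
  have := subsingleton_of_isTauRigidPair hMP e hk.1 hk.2
  obtain ⟨i, rfl⟩ := Fin.exists_castSucc_eq.2 hk.2
  have hpair : IsTauRigidPair (Op K) (Indec K i.castSucc × Indec K i.succ) (P × PUnit.{1}) :=
    isTauRigidPair_of_subsingleton_right (isTauRigid_indec_prod_indec K i)
  obtain ⟨⟨ι, hι, hadd⟩, -⟩ := hmax (.of _ (Indec K i.succ)) (.of _ PUnit)
    (hpair.congr (e.symm.prodCongr (.refl _ _)) (.refl _ _))
  obtain ⟨_, hret⟩ := hadd.exists_of_pi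
  have := congrArg Fin.val (eq_of_isRetract (hret.trans (.of_equiv e)))
  simp at this

end Completeness

section List

variable (K : Type) [Field K]

/-- The basic support `τ`-tilting modules: the five `τ`-tilting modules, and `Y`, `U` and `0`. -/
def supportTauTilting : Fin 5 ⊕ Fin 3 → ModCat (Op K) :=
  Sum.elim (fun i => .of _ (Indec K i.castSucc × Indec K i.succ))
    ![.of _ (Indec K 0), .of _ (Indec K 5), .of _ PUnit]

/-- The set of `k` for which `Indec K k` is a direct summand of `supportTauTilting K x`. -/
def summands : Fin 5 ⊕ Fin 3 → Finset (Fin 6) :=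
  Sum.elim (fun i => {i.castSucc, i.succ}) ![{0}, {5}, ∅]

theorem isSupportTauTilting_supportTauTilting (x : Fin 5 ⊕ Fin 3) :
    IsSupportTauTilting (Op K) (supportTauTilting K x) := by
  rcases x with i | x
  · exact isSupportTauTilting_indec_prod_indec K i
  · fin_cases x
    exacts [isSupportTauTilting_Y K, isSupportTauTilting_U K, isSupportTauTilting_punit K]

theorem isBasic_indec_prod_indec (i : Fin 5) :
    IsBasic (Op K) (Indec K i.castSucc × Indec K i.succ) :=
  .prod_of_isLocalRing_end <| not_nonempty_iff.1 fun h =>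
    Fin.castSucc_lt_succ.ne (eq_of_nonempty_equiv h)

theorem isBasic_supportTauTilting (x : Fin 5 ⊕ Fin 3) :
    IsBasic (Op K) (supportTauTilting K x) := by
  rcases x with i | x
  · exact isBasic_indec_prod_indec K i
  · fin_cases x
    · exact (isBasic_indec_prod_indec K 0).of_equiv_prod (.refl _ _)
    · exact (isBasic_indec_prod_indec K 4).of_equiv_prod (.prodComm _ _ _)
    · exact (isBasic_indec_prod_indec K 0).of_equiv_prod (.symm (.uniqueProd (M₂ := PUnit)))

variable {K}

theorem isRetract_supportTauTilting_iff {k : Fin 6} {x : Fin 5 ⊕ Fin 3} :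
    IsRetract (Op K) (Indec K k) (supportTauTilting K x) ↔ k ∈ summands x := by
  have hiff (l : Fin 6) : IsRetract (Op K) (Indec K k) (Indec K l) ↔ k = l :=
    ⟨eq_of_isRetract, by rintro rfl; exact .refl⟩
  rcases x with i | x
  · have : k ∈ summands (.inl i) ↔ k = i.castSucc ∨ k = i.succ := by simp [summands]
    rw [this, ← hiff, ← hiff]
    exact ⟨fun h => IsRetract.left_or_right h,
      fun h => h.elim (.trans · .fst_prod) (.trans · .snd_prod)⟩
  · fin_cases x
    · exact (hiff 0).trans Finset.mem_singleton.symm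
    · exact (hiff 5).trans Finset.mem_singleton.symm
    · refine iff_of_false (fun (h : IsRetract (Op K) _ PUnit.{1}) => ?_) (Finset.notMem_empty k)
      exact not_subsingleton (Indec K k) h.subsingleton

theorem eq_of_nonempty_equiv_supportTauTilting (x y : Fin 5 ⊕ Fin 3)
    (h : Nonempty (supportTauTilting K x ≃ₗ[Op K] supportTauTilting K y)) : x = y := by
  obtain ⟨e⟩ := h
  have hxy : summands x = summands y := Finset.ext fun k => by
    rw [← isRetract_supportTauTilting_iff (K := K), IsRetract.iff_of_equiv e,
      isRetract_supportTauTilting_iff]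
  decide +revert

theorem exists_equiv_supportTauTilting {M : Type} [AddCommGroup M] [Module (Op K) M]
    (h : IsSupportTauTilting (Op K) M) (hM : IsBasic (Op K) M) :
    ∃ x, Nonempty (M ≃ₗ[Op K] supportTauTilting K x) := by
  have hsingle {k : Fin 6} (e : M ≃ₗ[Op K] Indec K k) :
      ∃ x, Nonempty (M ≃ₗ[Op K] supportTauTilting K x) := by
    rcases eq_zero_or_eq_five_of_isSupportTauTilting h e with rfl | rfl
    exacts [⟨.inr 0, ⟨e⟩⟩, ⟨.inr 1, ⟨e⟩⟩]
  obtain ⟨P, ⟨_, hτ, -⟩, -⟩ := id h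
  obtain ⟨i, hi⟩ := exists_isSumOf_of_isTauRigid K hτ
  rcases hi.exists_equiv_of_isBasic hM with he | ⟨⟨e⟩⟩ | ⟨⟨e⟩⟩ | hM
  · exact ⟨.inl i, he⟩
  · exact hsingle e
  · exact hsingle e
  · have e : M ≃ₗ[Op K] PUnit := 0
    exact ⟨.inr 2, ⟨e⟩⟩

end List

end A5

theorem A5_has_exactly_eight_support_tau_tilting_modules_general (K : Type) [Field K] :
    SupportTauTiltingCount (A5 K)ᵐᵒᵖ 8 :=
  supportTauTiltingCount_card (A5.supportTauTilting K)
    (A5.isSupportTauTilting_supportTauTilting K) (A5.isBasic_supportTauTilting K)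
    A5.eq_of_nonempty_equiv_supportTauTilting fun _ => A5.exists_equiv_supportTauTilting

/-- appendix of the paper.  The weakly symmetric algebra
`A₅` of tubular type (quiver with vertices `1, 2`, a loop `α` at `1`, arrows
`γ : 1 → 2` and `β : 2 → 1`, bound by `α² = γβ` and `βαγ = 0`) has exactly `8`
isomorphism classes of basic support τ-tilting (right) modules. -/
theorem A5_has_exactly_eight_support_tau_tilting_modules
    (K : Type) [Field K] [IsAlgClosed K] (l : K) (hl0 : l ≠ 0) (hl1 : l ≠ 1) :
    SupportTauTiltingCount (A5 K)ᵐᵒᵖ 8 :=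
  A5_has_exactly_eight_support_tau_tilting_modules_general K

end PaperSilting
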